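/- Let $K$ be a field and $n \geq 3$. Then $\operatorname{ara}\, I(C_n) = \operatorname{pd}_R\, R/I(C_n)$, and this common value is $\frac{2n}{3}$ if $n \equiv 0 \pmod 3$, $\frac{2n+1}{3}$ if $n \equiv 1 \pmod 3$, and $\frac{2n-1}{3}$ if $n \equiv 2 \pmod 3$. -/

import Mathlib

open MvPolynomial

/-- Arithmetical rank: the least number of elements of `R` generating `I` up to radical. -/
noncomputable def araRank {R : Type} [CommRing R] (I : Ideal R) : ℕ :=
  sInf {s : ℕ | ∃ f : Fin s → R, (Ideal.span (Set.range f)).radical = I.radical}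

/-- The edge ideal `I(Cₙ) = (x₁x₂, x₂x₃, …, x_{n-1}xₙ, x₁xₙ)` of the `n`-cycle,
with the vertices `x₁,…,xₙ` of the cycle indexed by `ZMod n` (`xⱼ = X (j : ZMod n)`). -/
noncomputable def cycleIdeal (K : Type) [Field K] (n : ℕ) :
    Ideal (MvPolynomial (ZMod n) K) :=
  Ideal.span (Set.range fun i : ZMod n => X i * X (i + 1))

/-- `xⱼ`, the `j`-th variable of the polynomial ring (indices taken mod `n`). -/
noncomputable def xv (K : Type) [Field K] (n : ℕ) (j : ℕ) : MvPolynomial (ZMod n) K :=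
  X (j : ZMod n)

/-- Projective dimension of an `R`-module `M`, characterized via vanishing of the
`Ext` functors: the least `d` such that `Ext^i(M, N) = 0` for all `i > d` and all `N`. -/
noncomputable def projDim (R : Type) [CommRing R] (M : Type) [AddCommGroup M]
    [Module R M] : ℕ∞ :=
  sInf {d : ℕ∞ | ∀ i : ℕ, d < i → ∀ N : ModuleCat R,
    Subsingleton (((Ext R (ModuleCat R) i).obj (Opposite.op (ModuleCat.of R M))).obj N)}

/-!
The common value is `⌊(2n + 1) / 3⌋`.

For `ara ≤`, the edges are grouped in consecutive triples, two polynomials per triple: the middle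
edge, and the sum of the outer ones, whose product is a multiple of the middle edge. When
`n ≡ 2 (mod 3)` one more generator is saved by replacing the middle edges by sums of two, and a
prime containing all generators is chased around the cycle.

For `pd ≤`, the sequences `0 → R/(I : x) → R/I → R/(I + (x)) → 0` cut the cycle into paths and
then shorten the paths; removing three vertices of a path lowers the projective dimension by at
most two.

Both lower bounds come from one combinatorial obstruction. On lists of edges there is a cocycle,
supported on lists that cover a certain set `C` of vertices, which is not the coboundary of any
cochain supported there: it is an exterior product of indicators of blocks of edges, and is
detected by pairing it with an explicit cycle. Read in multidegree `C` of the Taylor resolution it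
gives a nonzero `Ext`, hence `pd ≥`. Read in multidegree `-C` it is a nonzero Čech cohomology
class, while Čech cohomology depends only on the radical and vanishes above the number of
generators, hence `ara ≥`.
-/

section RadicalGenerators
variable {R : Type*} [CommRing R]

/-- `I` agrees up to radical with an ideal generated by `s` elements; the least such `s` is the
arithmetical rank of `I`. -/
def GeneratedUpToRadical (I : Ideal R) (s : ℕ) : Prop :=
  ∃ f : Fin s → R, (Ideal.span (Set.range f)).radical = I.radical

theorem araRank_eq_of_isLeast {R : Type} [CommRing R] {I : Ideal R} {s : ℕ}
    (h : IsLeast {t | GeneratedUpToRadical I t} s) : araRank I = s :=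
  h.csInf_eq

theorem generatedUpToRadical_of_forall_isPrime {I : Ideal R} {ι : Type*} [Fintype ι] {s : ℕ}
    (hs : Fintype.card ι = s) (f : ι → R) (hf : ∀ i, f i ∈ I)
    (h : ∀ P : Ideal R, P.IsPrime → (∀ i, f i ∈ P) → I ≤ P) : GeneratedUpToRadical I s := by
  refine ⟨f ∘ (Fintype.equivFinOfCardEq hs).symm, ?_⟩
  rw [(Fintype.equivFinOfCardEq hs).symm.surjective.range_comp]
  refine le_antisymm (Ideal.radical_mono (Ideal.span_le.2 (Set.range_subset_iff.2 hf))) ?_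
  rw [Ideal.radical_le_radical_iff, Ideal.radical_eq_sInf]
  exact le_sInf fun P hP => h P hP.2 fun i => hP.1 (Ideal.subset_span ⟨i, rfl⟩)

variable {P : Ideal R} {q : ℕ → R} {k : ℕ}

theorem consecutive_products_mem (hP : P.IsPrime) {i : ℕ} (h₁ : q (i + 1) * q (i + 2) ∈ P)
    (h₂ : q i * q (i + 1) + q (i + 2) * q (i + 3) ∈ P) :
    q i * q (i + 1) ∈ P ∧ q (i + 2) * q (i + 3) ∈ P := by
  rcases hP.mem_or_mem h₁ with h | h
  · have hmem := P.mul_mem_left (q i) h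
    exact ⟨hmem, (P.add_mem_iff_right hmem).1 h₂⟩
  · have hmem := P.mul_mem_right (q (i + 3)) h
    exact ⟨(P.add_mem_iff_left hmem).1 h₂, hmem⟩

theorem products_mem_of_triples (hP : P.IsPrime)
    (h₁ : ∀ j < k, q (3 * j + 1) * q (3 * j + 2) ∈ P)
    (h₂ : ∀ j < k, q (3 * j) * q (3 * j + 1) + q (3 * j + 2) * q (3 * j + 3) ∈ P) :
    ∀ i < 3 * k, q i * q (i + 1) ∈ P := by
  intro i hi
  obtain ⟨j, rfl | rfl | rfl⟩ : ∃ j, i = 3 * j ∨ i = 3 * j + 1 ∨ i = 3 * j + 2 :=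
    ⟨i / 3, by omega⟩
  · exact (consecutive_products_mem hP (h₁ j (by omega)) (h₂ j (by omega))).1
  · exact h₁ j (by omega)
  · exact (consecutive_products_mem hP (h₁ j (by omega)) (h₂ j (by omega))).2

/-- If `q 2 * q 3 ∉ P`, membership of `q (3 * j + 1)` propagates from `j = 0` to `j = k`. -/
theorem product_two_three_mem (hP : P.IsPrime) (hq : q (3 * k + 2) = q 0)
    (h₀ : q 0 * q 1 ∈ P)
    (h₁ : ∀ j < k, q (3 * j + 1) * q (3 * j + 2) + q (3 * j + 3) * q (3 * j + 4) ∈ P)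
    (h₂ : ∀ j < k, 0 < j → q 2 * q 3 + q (3 * j + 2) * q (3 * j + 3) ∈ P)
    (h₃ : q 2 * q 3 + q (3 * k + 1) * q (3 * k + 2) ∈ P) : q 2 * q 3 ∈ P := by
  by_contra h
  have hlast : q (3 * k + 1) * q (3 * k + 2) ∉ P := fun h' => h ((P.add_mem_iff_left h').1 h₃)
  have hmid : ∀ j < k, q (3 * j + 2) * q (3 * j + 3) ∉ P := by
    intro j hj hmem
    rcases j.eq_zero_or_pos with rfl | hj0
    · exact h hmem
    · exact h ((P.add_mem_iff_left hmem).1 (h₂ j hj hj0))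
  have hone : q 1 ∈ P := (hP.mem_or_mem h₀).resolve_left fun h0 =>
    hlast (P.mul_mem_left _ (hq ▸ h0))
  have hpropagate : ∀ j ≤ k, q (3 * j + 1) ∈ P := by
    intro j
    induction j with
    | zero => exact fun _ => hone
    | succ j ih =>
      intro hj
      have hprod : q (3 * j + 3) * q (3 * j + 4) ∈ P :=
        (P.add_mem_iff_right (P.mul_mem_right _ (ih (by omega)))).1 (h₁ j (by omega))
      exact (hP.mem_or_mem hprod).resolve_left fun hmem =>
        hmid j (by omega) (P.mul_mem_left _ hmem)
  exact hlast (P.mul_mem_right _ (hpropagate k le_rfl))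

theorem products_mem_of_cyclic_triples (hP : P.IsPrime) (hq : q (3 * k + 2) = q 0)
    (h₀ : q 0 * q 1 ∈ P)
    (h₁ : ∀ j < k, q (3 * j + 1) * q (3 * j + 2) + q (3 * j + 3) * q (3 * j + 4) ∈ P)
    (h₂ : ∀ j < k, 0 < j → q 2 * q 3 + q (3 * j + 2) * q (3 * j + 3) ∈ P)
    (h₃ : q 2 * q 3 + q (3 * k + 1) * q (3 * k + 2) ∈ P) :
    ∀ i < 3 * k + 2, q i * q (i + 1) ∈ P := by
  have hfirst : q 2 * q 3 ∈ P := product_two_three_mem hP hq h₀ h₁ h₂ h₃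
  have hmid : ∀ j < k, q (3 * j + 2) * q (3 * j + 3) ∈ P := by
    intro j hj
    rcases j.eq_zero_or_pos with rfl | hj0
    · exact hfirst
    · exact (P.add_mem_iff_right hfirst).1 (h₂ j hj hj0)
  intro i hi
  obtain rfl | hi0 := i.eq_zero_or_pos
  · exact h₀
  obtain ⟨j, rfl | rfl | rfl⟩ : ∃ j, i = 3 * j + 1 ∨ i = 3 * j + 2 ∨ i = 3 * j + 3 :=
    ⟨(i - 1) / 3, by omega⟩
  · obtain hj | rfl : j < k ∨ j = k := by omega
    · exact (consecutive_products_mem hP (hmid j hj) (h₁ j hj)).1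
    · exact (P.add_mem_iff_right hfirst).1 h₃
  · exact hmid j (by omega)
  · exact (consecutive_products_mem hP (hmid j (by omega)) (h₁ j (by omega))).2

/-- The ideal generated by the products `q i * q (i + 1)` with `i < n`. With `q` the variables of a
polynomial ring it is the edge ideal of a path, or of a cycle if `q n = q 0`. -/
def consecutiveIdeal (q : ℕ → R) (n : ℕ) : Ideal R :=
  Ideal.span ((fun i => q i * q (i + 1)) '' Set.Iio n)

theorem mem_consecutiveIdeal {n i : ℕ} (hi : i < n) : q i * q (i + 1) ∈ consecutiveIdeal q n :=
  Ideal.subset_span ⟨i, hi, rfl⟩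

theorem consecutiveIdeal_le {n : ℕ} {I : Ideal R} (h : ∀ i < n, q i * q (i + 1) ∈ I) :
    consecutiveIdeal q n ≤ I :=
  Ideal.span_le.2 (Set.image_subset_iff.2 h)

theorem generatedUpToRadical_consecutiveIdeal_three_mul (q : ℕ → R) (k : ℕ) :
    GeneratedUpToRadical (consecutiveIdeal q (3 * k)) (2 * k) := by
  refine generatedUpToRadical_of_forall_isPrime (ι := Fin k ⊕ Fin k) (by simp [two_mul])
    (Sum.elim (fun j => q (3 * j + 1) * q (3 * j + 2))
      fun j => q (3 * j) * q (3 * j + 1) + q (3 * j + 2) * q (3 * j + 3)) ?_ fun P hP h => ?_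
  · rintro (j | j)
    · exact mem_consecutiveIdeal (by omega)
    · exact add_mem (mem_consecutiveIdeal (by omega)) (mem_consecutiveIdeal (by omega))
  · exact consecutiveIdeal_le (products_mem_of_triples hP (fun j hj => h (.inl ⟨j, hj⟩))
      fun j hj => h (.inr ⟨j, hj⟩))

theorem generatedUpToRadical_consecutiveIdeal_three_mul_add_one (q : ℕ → R) (k : ℕ) :
    GeneratedUpToRadical (consecutiveIdeal q (3 * k + 1)) (2 * k + 1) := by
  refine generatedUpToRadical_of_forall_isPrime (ι := Option (Fin k ⊕ Fin k)) (by simp [two_mul])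
    (fun o => o.elim (q (3 * k) * q (3 * k + 1))
      (Sum.elim (fun j => q (3 * j + 1) * q (3 * j + 2))
        fun j => q (3 * j) * q (3 * j + 1) + q (3 * j + 2) * q (3 * j + 3))) ?_ fun P hP h => ?_
  · rintro (_ | j | j)
    · exact mem_consecutiveIdeal (by omega)
    · exact mem_consecutiveIdeal (by omega)
    · exact add_mem (mem_consecutiveIdeal (by omega)) (mem_consecutiveIdeal (by omega))
  · refine consecutiveIdeal_le fun i hi => ?_
    obtain hi | rfl : i < 3 * k ∨ i = 3 * k := by omega
    · exact products_mem_of_triples hP (fun j hj => h (some (.inl ⟨j, hj⟩)))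
        (fun j hj => h (some (.inr ⟨j, hj⟩))) i hi
    · exact h none

theorem generatedUpToRadical_consecutiveIdeal_three_mul_add_two (hk : 0 < k)
    (hq : q (3 * k + 2) = q 0) :
    GeneratedUpToRadical (consecutiveIdeal q (3 * k + 2)) (2 * k + 1) := by
  refine generatedUpToRadical_of_forall_isPrime (ι := Option (Fin k ⊕ Fin k)) (by simp [two_mul])
    (fun o => o.elim (q 0 * q 1)
      (Sum.elim (fun j => q (3 * j + 1) * q (3 * j + 2) + q (3 * j + 3) * q (3 * j + 4))
        fun j => q 2 * q 3 + if j.1 = 0 then q (3 * k + 1) * q (3 * k + 2)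
          else q (3 * j + 2) * q (3 * j + 3))) ?_ fun P hP h => ?_
  · rintro (_ | j | j)
    · exact mem_consecutiveIdeal (by omega)
    · exact add_mem (mem_consecutiveIdeal (by omega)) (mem_consecutiveIdeal (by omega))
    · refine add_mem (mem_consecutiveIdeal (by omega)) ?_
      split_ifs
      · exact mem_consecutiveIdeal (by omega)
      · exact mem_consecutiveIdeal (by omega)
  · refine consecutiveIdeal_le (products_mem_of_cyclic_triples hP hq (h none)
      (fun j hj => h (some (.inl ⟨j, hj⟩))) (fun j hj hj0 => ?_) ?_)
    · simpa [hj0.ne'] using h (some (.inr ⟨j, hj⟩))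
    · simpa using h (some (.inr ⟨0, hk⟩))

theorem cycleIdeal_eq_consecutiveIdeal (K : Type) [Field K] (n : ℕ) [NeZero n] :
    cycleIdeal K n = consecutiveIdeal (xv K n) n := by
  refine le_antisymm (Ideal.span_le.2 (Set.range_subset_iff.2 fun i => ?_))
    (consecutiveIdeal_le fun i _ => Ideal.subset_span ⟨i, by simp [xv]⟩)
  simpa [xv] using mem_consecutiveIdeal (q := xv K n) i.val_lt

theorem generatedUpToRadical_cycleIdeal (K : Type) [Field K] {n : ℕ} (hn : 3 ≤ n) :
    GeneratedUpToRadical (cycleIdeal K n) ((2 * n + 1) / 3) := by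
  have : NeZero n := ⟨by omega⟩
  rw [cycleIdeal_eq_consecutiveIdeal]
  obtain ⟨k, hk⟩ : ∃ k, n = 3 * k ∨ n = 3 * k + 1 ∨ n = 3 * k + 2 := ⟨n / 3, by omega⟩
  rcases hk with hk | hk | hk
  · convert generatedUpToRadical_consecutiveIdeal_three_mul (xv K n) k using 2
    omega
  · convert generatedUpToRadical_consecutiveIdeal_three_mul_add_one (xv K n) k using 2
    omega
  · convert generatedUpToRadical_consecutiveIdeal_three_mul_add_two (q := xv K n) (k := k)
      (by omega) (by simp [xv, ← hk]) using 2
    omega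

end RadicalGenerators

section ProjectiveDimension
open CategoryTheory
universe u
variable {R : Type u} [CommRing R]

theorem subsingleton_leftDerivedExt_iff (M N : ModuleCat.{u} R) (p : ℕ) :
    Subsingleton (((Ext R (ModuleCat R) (p + 1)).obj (Opposite.op M)).obj N) ↔
      Subsingleton (Abelian.Ext M N (p + 1)) := by
  obtain ⟨P⟩ : Nonempty (ProjectiveResolution M) := HasProjectiveResolution.out
  have hcocycles : Subsingleton (((Ext R (ModuleCat R) (p + 1)).obj (Opposite.op M)).obj N) ↔
      ∀ f : P.complex.X (p + 1) ⟶ N, P.complex.d (p + 2) (p + 1) ≫ f = 0 →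
        ∃ g : P.complex.X p ⟶ N, P.complex.d (p + 1) p ≫ g = f := by
    rw [← ModuleCat.isZero_iff_subsingleton, Iso.isZero_iff (P.isoExt (p + 1) N),
      ← HomologicalComplex.exactAt_iff_isZero_homology,
      HomologicalComplex.exactAt_iff' _ p (p + 1) (p + 2) (by simp) (by simp),
      ShortComplex.moduleCat_exact_iff]
    rfl
  rw [hcocycles]
  constructor
  · refine fun h => subsingleton_of_forall_eq 0 fun a => ?_
    obtain ⟨f, hf, rfl⟩ := P.extMk_surjective a (p + 2) rfl
    rw [P.extMk_eq_zero_iff _ _ _ _ p rfl]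
    exact h f hf
  · intro h f hf
    exact (P.extMk_eq_zero_iff f (p + 2) rfl hf p rfl).1 (Subsingleton.elim _ _)

theorem subsingleton_leftDerivedExt_iff_hasProjectiveDimensionLE (M : ModuleCat.{u} R) (d : ℕ) :
    (∀ i : ℕ, d < i → ∀ N : ModuleCat.{u} R,
      Subsingleton (((Ext R (ModuleCat R) i).obj (Opposite.op M)).obj N)) ↔
    HasProjectiveDimensionLE M d := by
  constructor
  · refine fun h => HasProjectiveDimensionLT.mk fun i hi Y e => ?_
    obtain ⟨p, rfl⟩ : ∃ p, i = p + 1 := ⟨i - 1, by omega⟩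
    have := (subsingleton_leftDerivedExt_iff M Y p).1 (h _ (by omega) Y)
    exact Subsingleton.elim _ _
  · intro h i hi N
    obtain ⟨p, rfl⟩ : ∃ p, i = p + 1 := ⟨i - 1, by omega⟩
    rw [subsingleton_leftDerivedExt_iff]
    exact HasProjectiveDimensionLT.subsingleton M (d + 1) (p + 1) (by omega) N

theorem projDim_le_iff {R : Type} [CommRing R] {M : Type} [AddCommGroup M] [Module R M] (d : ℕ) :
    projDim R M ≤ d ↔ HasProjectiveDimensionLE (ModuleCat.of R M) d := by
  rw [← subsingleton_leftDerivedExt_iff_hasProjectiveDimensionLE]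
  refine ⟨fun h i hi => ?_, fun h => sInf_le fun i hi => h i (Nat.cast_lt.1 hi)⟩
  have hmem : projDim R M ∈ _ := csInf_mem ⟨⊤, fun i hi => absurd hi not_top_lt⟩
  exact hmem i (h.trans_lt (Nat.cast_lt.2 hi))

/-- The projective dimension of `R ⧸ I` is at most `d`. -/
abbrev QuotProjDimLE (I : Ideal R) (d : ℕ) : Prop :=
  HasProjectiveDimensionLE (ModuleCat.of R (R ⧸ I)) d

variable {I : Ideal R} {a : R} {d e : ℕ}

theorem QuotProjDimLE.mono (h : QuotProjDimLE I d) (hde : d ≤ e) : QuotProjDimLE I e :=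
  hasProjectiveDimensionLT_of_ge _ (d + 1) (e + 1) (by omega)

theorem quotProjDimLE_bot : QuotProjDimLE (⊥ : Ideal R) 0 := by
  have : Projective (ModuleCat.of R R) := inferInstance
  have : HasProjectiveDimensionLT (ModuleCat.of R R) 1 := inferInstance
  exact hasProjectiveDimensionLT_of_iso
    ((Submodule.quotEquivOfEqBot (⊥ : Submodule R R) rfl).symm.toModuleIso) 1

/-- Multiplication by `a` as a map `R ⧸ (I : a) → R ⧸ I`. -/
def quotColonMul (I : Ideal R) (a : R) : (R ⧸ I.colon {a}) →ₗ[R] R ⧸ I :=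
  Submodule.mapQ _ _ (LinearMap.mulRight R a) fun _ hr => Submodule.mem_colon_singleton.1 hr

theorem quotColonMul_mk (r : R) :
    quotColonMul I a (Submodule.Quotient.mk r) = Submodule.Quotient.mk (r * a) := rfl

theorem quotColonMul_injective (I : Ideal R) (a : R) : Function.Injective (quotColonMul I a) := by
  rw [injective_iff_map_eq_zero]
  intro y hy
  obtain ⟨r, rfl⟩ := Submodule.Quotient.mk_surjective _ y
  rw [quotColonMul_mk, Submodule.Quotient.mk_eq_zero] at hy
  exact (Submodule.Quotient.mk_eq_zero _).2 (Submodule.mem_colon_singleton.2 hy)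

theorem exact_quotColonMul_factor (I : Ideal R) (a : R) :
    Function.Exact (quotColonMul I a)
      (Submodule.factor (le_sup_left : I ≤ I ⊔ Ideal.span {a})) := by
  intro y
  obtain ⟨y, rfl⟩ := Submodule.Quotient.mk_surjective _ y
  have hker : Submodule.factor (le_sup_left : I ≤ I ⊔ Ideal.span {a})
      (Submodule.Quotient.mk y) = 0 ↔ y ∈ I ⊔ Ideal.span {a} := Submodule.Quotient.mk_eq_zero _
  rw [hker, Submodule.mem_sup]
  constructor
  · rintro ⟨u, hu, w, hw, rfl⟩
    obtain ⟨c, rfl⟩ := Ideal.mem_span_singleton'.1 hw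
    refine ⟨Submodule.Quotient.mk c, ?_⟩
    rw [quotColonMul_mk, Submodule.Quotient.eq]
    simpa using I.neg_mem hu
  · rintro ⟨c, hc⟩
    obtain ⟨c, rfl⟩ := Submodule.Quotient.mk_surjective _ c
    rw [quotColonMul_mk, Submodule.Quotient.eq] at hc
    exact ⟨y - c * a, by simpa using I.neg_mem hc, c * a, Ideal.mem_span_singleton'.2 ⟨c, rfl⟩,
      by ring⟩

theorem shortExact_quotColonMul_factor (I : Ideal R) (a : R) :
    (ModuleCat.shortComplexOfCompEqZero _ _
      (exact_quotColonMul_factor I a).linearMap_comp_eq_zero).ShortExact :=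
  ModuleCat.shortComplex_shortExact _ (exact_quotColonMul_factor I a) (quotColonMul_injective I a)
    (Submodule.factor_surjective le_sup_left)

theorem QuotProjDimLE.of_colon (h₁ : QuotProjDimLE (I.colon {a}) d)
    (h₂ : QuotProjDimLE (I ⊔ Ideal.span {a}) d) : QuotProjDimLE I d :=
  (shortExact_quotColonMul_factor I a).hasProjectiveDimensionLT_X₂ _ h₁ h₂

theorem QuotProjDimLE.sup_span (ha : I.colon {a} = I) (h : QuotProjDimLE I d) :
    QuotProjDimLE (I ⊔ Ideal.span {a}) (d + 1) := by
  have hcolon : QuotProjDimLE (I.colon {a}) d := by rwa [ha]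
  exact (shortExact_quotColonMul_factor I a).hasProjectiveDimensionLT_X₃ (d + 1) hcolon
    (h.mono d.le_succ)

end ProjectiveDimension

section SquarefreeMonomialIdeals
universe u v
variable {σ : Type u} {K : Type v} [CommRing K]

variable (K) in
/-- The ideal spanned by the monomials whose support satisfies `Q`; as `Q` varies over the monotone
predicates these are the squarefree monomial ideals. -/
noncomputable def supportIdeal (Q : Finset σ → Prop) : Ideal (MvPolynomial σ K) :=
  Ideal.span ((fun m => monomial m (1 : K)) '' {m | Q m.support})

variable {Q : Finset σ → Prop}

theorem mem_supportIdeal (hQ : Monotone Q) {p : MvPolynomial σ K} :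
    p ∈ supportIdeal K Q ↔ ∀ m ∈ p.support, Q m.support := by
  rw [supportIdeal, mem_ideal_span_monomial_image]
  refine forall₂_congr fun m _ => ⟨?_, fun h => ⟨m, h, le_rfl⟩⟩
  rintro ⟨s, hs, hsm⟩
  exact hQ (Finsupp.support_mono hsm) hs

theorem monotone_mem_or (hQ : Monotone Q) (i : σ) : Monotone fun T => i ∈ T ∨ Q T :=
  fun _ _ h => Or.imp (fun hi => h hi) (hQ h)

theorem supportIdeal_mem_or (Q : Finset σ → Prop) (i : σ) :
    supportIdeal K (fun T => i ∈ T ∨ Q T) = supportIdeal K Q ⊔ Ideal.span {X i} := by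
  apply le_antisymm
  · rw [supportIdeal, Ideal.span_le]
    rintro _ ⟨m, hm | hm, rfl⟩
    · exact Ideal.mem_sup_right (Ideal.mem_span_singleton.2
        (X_dvd_monomial.2 (Or.inr (Finsupp.mem_support_iff.1 hm))))
    · exact Ideal.mem_sup_left (Ideal.subset_span ⟨m, hm, rfl⟩)
  · refine sup_le (Ideal.span_mono (Set.image_mono fun m hm => Or.inr hm)) ?_
    rw [Ideal.span_le, Set.singleton_subset_iff]
    exact Ideal.subset_span ⟨Finsupp.single i 1, Or.inl (by simp), rfl⟩

variable (σ K) in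
theorem quotProjDimLE_supportIdeal_false (d : ℕ) :
    QuotProjDimLE (supportIdeal K fun _ : Finset σ => False) d := by
  have hbot : supportIdeal K (fun _ : Finset σ => False) = ⊥ := by simp [supportIdeal]
  rw [hbot]
  exact quotProjDimLE_bot.mono d.zero_le

theorem supportIdeal_colon_X [DecidableEq σ] (hQ : Monotone Q) (i : σ) :
    (supportIdeal K Q).colon {X i} = supportIdeal K fun T => Q (insert i T) := by
  ext p
  have hsupport (m : σ →₀ ℕ) : (m + Finsupp.single i 1).support = insert i m.support := by
    ext j
    by_cases h : i = j <;> simp [h, eq_comm]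
  rw [Submodule.mem_colon_singleton, smul_eq_mul, mem_supportIdeal hQ,
    mem_supportIdeal fun _ _ h => hQ (Finset.insert_subset_insert i h), support_mul_X]
  simp [hsupport]

theorem QuotProjDimLE.of_insert [DecidableEq σ] {Q₁ Q₂ : Finset σ → Prop} {d : ℕ}
    (hQ : Monotone Q) (i : σ) (hQ₁ : ∀ T, Q (insert i T) ↔ Q₁ T)
    (hQ₂ : ∀ T, i ∈ T ∨ Q T ↔ i ∈ T ∨ Q₂ T) (h₁ : QuotProjDimLE (supportIdeal K Q₁) d)
    (h₂ : QuotProjDimLE (supportIdeal K fun T => i ∈ T ∨ Q₂ T) d) :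
    QuotProjDimLE (supportIdeal K Q) d := by
  refine QuotProjDimLE.of_colon (a := X i) ?_ ?_
  · simpa only [supportIdeal_colon_X hQ, hQ₁] using h₁
  · simpa only [← supportIdeal_mem_or, hQ₂] using h₂

theorem QuotProjDimLE.mem_or [DecidableEq σ] {i : σ} {d : ℕ}
    (h : QuotProjDimLE (supportIdeal K Q) d) (hQ : Monotone Q) (hi : ∀ T, Q (insert i T) ↔ Q T) :
    QuotProjDimLE (supportIdeal K fun T => i ∈ T ∨ Q T) (d + 1) := by
  rw [supportIdeal_mem_or]
  exact h.sup_span (by simp only [supportIdeal_colon_X hQ, hi])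

/-- Some two consecutive entries of the list both lie in `T`. The monomials with such a support
`T` form the edge ideal of the path, or closed walk, that the list describes. -/
def HasConsecutive (L : List σ) (T : Finset σ) : Prop :=
  ¬L.IsChain fun a b => ¬(a ∈ T ∧ b ∈ T)

section
variable {a b : σ} {L : List σ} {T : Finset σ}

theorem hasConsecutive_cons_cons :
    HasConsecutive (a :: b :: L) T ↔ (a ∈ T ∧ b ∈ T) ∨ HasConsecutive (b :: L) T := by
  rw [HasConsecutive, List.isChain_cons_cons, not_and_or, not_not, HasConsecutive]

theorem hasConsecutive_nil : HasConsecutive ([] : List σ) = fun _ => False :=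
  funext fun _ => eq_false (not_not.2 .nil)

theorem hasConsecutive_singleton : HasConsecutive [a] = fun _ => False :=
  funext fun _ => eq_false (not_not.2 (.singleton a))

theorem hasConsecutive_reverse : HasConsecutive L.reverse T ↔ HasConsecutive L T := by
  rw [HasConsecutive, HasConsecutive, List.isChain_reverse]
  simp only [and_comm]

theorem monotone_hasConsecutive (L : List σ) : Monotone (HasConsecutive L) :=
  fun _ _ hST => mt <| List.IsChain.imp fun _ _ h h' =>
    h (h'.imp (fun ha => hST ha) fun hb => hST hb)

theorem hasConsecutive_insert [DecidableEq σ] (ha : a ∉ L) :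
    HasConsecutive L (insert a T) ↔ HasConsecutive L T := by
  refine not_congr (List.IsChain.iff_of_mem_imp fun b c hb hc => ?_)
  simp only [Finset.mem_insert, ne_of_mem_of_not_mem hb ha, ne_of_mem_of_not_mem hc ha, false_or]

theorem mem_or_hasConsecutive_cons :
    a ∈ T ∨ HasConsecutive (a :: L) T ↔ a ∈ T ∨ HasConsecutive L T := by
  cases L with
  | nil => simp only [hasConsecutive_singleton, hasConsecutive_nil]
  | cons b L => rw [hasConsecutive_cons_cons]; tauto

theorem mem_or_hasConsecutive_concat :
    a ∈ T ∨ HasConsecutive (L ++ [a]) T ↔ a ∈ T ∨ HasConsecutive L T := by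
  rw [← hasConsecutive_reverse, List.reverse_append, List.reverse_singleton, List.singleton_append,
    mem_or_hasConsecutive_cons, hasConsecutive_reverse]

theorem hasConsecutive_closed {c : σ} :
    HasConsecutive (c :: a :: (L ++ [b]) ++ [c]) T ↔
      (c ∈ T ∧ (a ∈ T ∨ b ∈ T)) ∨ HasConsecutive (a :: (L ++ [b])) T := by
  have hlast : HasConsecutive (a :: (L ++ [b]) ++ [c]) T ↔
      (b ∈ T ∧ c ∈ T) ∨ HasConsecutive (a :: (L ++ [b])) T := by
    rw [← hasConsecutive_reverse, ← hasConsecutive_reverse (L := a :: (L ++ [b]))]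
    simp only [List.reverse_append, List.reverse_cons, List.reverse_nil, List.nil_append,
      List.cons_append, hasConsecutive_cons_cons]
    tauto
  rw [List.cons_append, List.cons_append, hasConsecutive_cons_cons, ← List.cons_append, hlast]
  tauto

theorem mem_or_mem_or_hasConsecutive :
    a ∈ T ∨ b ∈ T ∨ HasConsecutive (a :: (L ++ [b])) T ↔ a ∈ T ∨ b ∈ T ∨ HasConsecutive L T := by
  have hlast := mem_or_hasConsecutive_concat (a := b) (L := L) (T := T)
  have hfirst := mem_or_hasConsecutive_cons (a := a) (L := L ++ [b]) (T := T)
  tauto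

theorem hasConsecutive_map_range {v : ℕ → σ} {n : ℕ} :
    HasConsecutive ((List.range (n + 1)).map v) T ↔ ∃ i < n, v i ∈ T ∧ v (i + 1) ∈ T := by
  simp only [HasConsecutive, List.isChain_map, List.isChain_range_succ]
  push Not
  rfl

end

theorem consecutiveIdeal_X_eq_supportIdeal {v : ℕ → σ} {n : ℕ} (hv : ∀ i < n, v i ≠ v (i + 1)) :
    consecutiveIdeal (fun i => (X (v i) : MvPolynomial σ K)) n =
      supportIdeal K (HasConsecutive ((List.range (n + 1)).map v)) := by
  have hX (i : ℕ) : (X (v i) * X (v (i + 1)) : MvPolynomial σ K) =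
      monomial (Finsupp.single (v i) 1 + Finsupp.single (v (i + 1)) 1) 1 := by
    simp [X, monomial_mul]
  apply le_antisymm
  · refine consecutiveIdeal_le fun i hi =>
      Ideal.subset_span ⟨_, hasConsecutive_map_range.2 ⟨i, hi, ?_, ?_⟩, (hX i).symm⟩ <;> simp
  · refine Ideal.span_le.2 ?_
    rintro _ ⟨m, hm, rfl⟩
    obtain ⟨i, hi, h₁, h₂⟩ := hasConsecutive_map_range.1 hm
    refine Ideal.mem_of_dvd _ ?_ (mem_consecutiveIdeal hi)
    rw [hX, monomial_dvd_monomial]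
    refine ⟨Or.inr fun j => ?_, dvd_rfl⟩
    rw [Finsupp.mem_support_iff] at h₁ h₂
    classical
    have hne := hv i hi
    simp only [Finsupp.coe_add, Pi.add_apply, Finsupp.single_apply]
    split_ifs with hj hj' hj'
    · exact absurd (hj.trans hj'.symm) hne
    · subst hj
      omega
    · subst hj'
      omega
    · exact Nat.zero_le _

theorem quotProjDimLE_hasConsecutive_pair {a b : σ} (hab : a ≠ b) :
    QuotProjDimLE (supportIdeal K (HasConsecutive [a, b])) 1 := by
  classical
  have hvar (i : σ) := (quotProjDimLE_supportIdeal_false σ K 0).mem_or monotone_const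
    (i := i) fun _ => Iff.rfl
  refine .of_insert (monotone_hasConsecutive _) b (fun T => ?_) (fun T => ?_) (hvar a) (hvar b)
  · simp [hasConsecutive_cons_cons, hasConsecutive_singleton, hab]
  · simp only [hasConsecutive_cons_cons, hasConsecutive_singleton]
    tauto

theorem QuotProjDimLE.hasConsecutive_cons_cons_cons {a b c : σ} {L : List σ} {d : ℕ}
    (hL : (a :: b :: c :: L).Nodup) (h₁ : QuotProjDimLE (supportIdeal K (HasConsecutive L)) d)
    (h₂ : QuotProjDimLE (supportIdeal K (HasConsecutive (c :: L))) (d + 1)) :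
    QuotProjDimLE (supportIdeal K (HasConsecutive (a :: b :: c :: L))) (d + 2) := by
  classical
  simp only [List.nodup_cons, List.mem_cons, not_or] at hL
  obtain ⟨⟨hab, hac, haL⟩, ⟨hbc, hbL⟩, hcL, -⟩ := hL
  have hb : b ∉ c :: L := by simp [hbc, hbL]
  refine .of_insert (monotone_hasConsecutive _) b (fun T => ?_) (fun T => ?_)
    ((h₁.mem_or (monotone_hasConsecutive L) (i := c) fun T => hasConsecutive_insert hcL).mem_or
      (monotone_mem_or (monotone_hasConsecutive L) c) (i := a) fun T => ?_)
    (h₂.mem_or (monotone_hasConsecutive _) (i := b) fun T => hasConsecutive_insert hb)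
  · rw [← mem_or_hasConsecutive_cons]
    simp only [hasConsecutive_cons_cons, hasConsecutive_insert hb, Finset.mem_insert, hab,
      Ne.symm hbc]
    tauto
  · simp only [hasConsecutive_cons_cons]
    tauto
  · simp [hasConsecutive_insert haL, Ne.symm hac]

theorem quotProjDimLE_hasConsecutive (L : List σ) (hL : L.Nodup) :
    QuotProjDimLE (supportIdeal K (HasConsecutive L)) (2 * L.length / 3) := by
  match L with
  | [] => simpa only [hasConsecutive_nil] using quotProjDimLE_supportIdeal_false σ K _
  | [a] => simpa only [hasConsecutive_singleton] using quotProjDimLE_supportIdeal_false σ K _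
  | [a, b] => exact (quotProjDimLE_hasConsecutive_pair (by simpa using hL)).mono (by simp)
  | a :: b :: c :: L =>
    have hcL : (c :: L).Nodup := hL.of_cons.of_cons
    refine QuotProjDimLE.mono (.hasConsecutive_cons_cons_cons hL
      (quotProjDimLE_hasConsecutive L hcL.of_cons)
      ((quotProjDimLE_hasConsecutive (c :: L) hcL).mono ?_)) ?_ <;>
    · simp only [List.length_cons]
      omega
termination_by L.length

theorem quotProjDimLE_hasConsecutive_closed {a b c : σ} {L : List σ}
    (hL : (c :: a :: (L ++ [b])).Nodup) :
    QuotProjDimLE (supportIdeal K (HasConsecutive (c :: a :: (L ++ [b]) ++ [c])))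
      ((2 * (L.length + 3) + 1) / 3) := by
  classical
  have hpath : (a :: (L ++ [b])).Nodup := hL.of_cons
  have hc : c ∉ a :: (L ++ [b]) := hL.notMem
  obtain ⟨hca, -, hcb⟩ : c ≠ a ∧ c ∉ L ∧ c ≠ b := by simpa using hc
  obtain ⟨haL, hab, hbL, hnodup⟩ : a ∉ L ∧ a ≠ b ∧ b ∉ L ∧ L.Nodup := by
    simp only [List.nodup_cons, List.nodup_append, List.mem_append, List.mem_singleton] at hpath
    grind
  have hcolon := ((quotProjDimLE_hasConsecutive (K := K) L hnodup).mem_or (i := b)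
    (monotone_hasConsecutive L) fun T => hasConsecutive_insert hbL).mem_or (i := a)
    (monotone_mem_or (monotone_hasConsecutive L) b) fun T => by
      simp [hasConsecutive_insert haL, Ne.symm hab]
  have hsup := (quotProjDimLE_hasConsecutive (K := K) _ hpath).mem_or (i := c)
    (monotone_hasConsecutive _) fun T => hasConsecutive_insert hc
  refine .of_insert (monotone_hasConsecutive _) c (fun T => ?_) (fun T => ?_)
    (hcolon.mono (by omega)) (hsup.mono (by simp; omega))
  · rw [hasConsecutive_closed, hasConsecutive_insert hc, ← mem_or_mem_or_hasConsecutive]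
    simp [hca.symm, hcb.symm, or_assoc]
  · rw [hasConsecutive_closed]
    tauto

theorem quotProjDimLE_consecutiveIdeal_closed {v : ℕ → σ} {n : ℕ} (hn : 3 ≤ n)
    (hinj : Set.InjOn v (Set.Iio n)) (hclosed : v n = v 0) :
    QuotProjDimLE (consecutiveIdeal (fun i => (X (v i) : MvPolynomial σ K)) n)
      ((2 * n + 1) / 3) := by
  obtain ⟨m, rfl⟩ : ∃ m, n = m + 3 := ⟨n - 3, by omega⟩
  have hne : ∀ i < m + 3, v i ≠ v (i + 1) := by
    intro i hi h
    obtain hi' | rfl : i + 1 < m + 3 ∨ i = m + 2 := by omega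
    · exact absurd (hinj hi hi' h) (by omega)
    · exact absurd (hinj hi (by simp) (h.trans hclosed)) (by omega)
  have hcycle : (List.range (m + 3)).map v =
      v 0 :: v 1 :: ((List.range m).map (fun i => v (i + 2)) ++ [v (m + 2)]) := by
    rw [List.range_succ_eq_map, List.range_succ_eq_map, List.range_succ]
    simp [Function.comp_def]
  have hnodup : ((List.range (m + 3)).map v).Nodup :=
    List.Nodup.map_on (fun i hi j hj => hinj (List.mem_range.1 hi) (List.mem_range.1 hj))
      List.nodup_range
  rw [consecutiveIdeal_X_eq_supportIdeal hne, List.range_succ, List.map_append, hcycle,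
    List.map_singleton, hclosed]
  exact (quotProjDimLE_hasConsecutive_closed (hcycle ▸ hnodup)).mono (by simp)

theorem quotProjDimLE_cycleIdeal (K : Type) [Field K] {n : ℕ} (hn : 3 ≤ n) :
    QuotProjDimLE (cycleIdeal K n) ((2 * n + 1) / 3) := by
  have : NeZero n := ⟨by omega⟩
  rw [cycleIdeal_eq_consecutiveIdeal]
  refine quotProjDimLE_consecutiveIdeal_closed hn (fun i hi j hj hij => ?_) (by simp)
  rwa [ZMod.natCast_eq_natCast_iff', Nat.mod_eq_of_lt hi, Nat.mod_eq_of_lt hj] at hij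

end SquarefreeMonomialIdeals

section Cochains
variable {ι A F G : Type*} [CommRing A] [AddCommGroup F] [AddCommGroup G] [Module A F] [Module A G]

/-- Left exterior multiplication by the one-form `a`. A cochain is a function on lists of indices,
with no antisymmetry imposed, so that `wedge` needs neither an order on `ι` nor signs. -/
def wedge (a : ι → A) : (List ι → F) → List ι → F
  | _, [] => 0
  | c, j :: l => a j • c l - wedge a (fun u => c (j :: u)) l

/-- The simplicial coboundary, which is exterior multiplication by the constant one-form `1`. -/
abbrev coboundary (c : List ι → F) : List ι → F := wedge (fun _ => (1 : ℤ)) c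

theorem wedge_nil (a : ι → A) (c : List ι → F) : wedge a c [] = 0 := rfl

theorem wedge_cons (a : ι → A) (c : List ι → F) (j : ι) (l : List ι) :
    wedge a c (j :: l) = a j • c l - wedge a (fun u => c (j :: u)) l := rfl

theorem wedge_cons_fun (a : ι → A) (c : List ι → F) (j : ι) :
    (fun u => wedge a c (j :: u)) = a j • c - wedge a (fun u => c (j :: u)) := rfl

theorem coboundary_cons (c : List ι → F) (j : ι) (l : List ι) :
    coboundary c (j :: l) = c l - coboundary (fun u => c (j :: u)) l := by
  rw [coboundary, wedge_cons, one_smul]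

theorem wedge_linearMap (a : ι → A) (φ : F →ₗ[A] G) (c : List ι → F) (l : List ι) :
    wedge a (fun u => φ (c u)) l = φ (wedge a c l) := by
  induction l generalizing c with
  | nil => rw [wedge_nil, wedge_nil, map_zero]
  | cons j l ih => rw [wedge_cons, wedge_cons, map_sub, map_smul, ← ih]

theorem coboundary_map (φ : F →+ G) (c : List ι → F) (l : List ι) :
    coboundary (fun u => φ (c u)) l = φ (coboundary c l) :=
  wedge_linearMap _ φ.toIntLinearMap c l

theorem coboundary_eq_wedge_one (c : List ι → F) (l : List ι) :
    coboundary c l = wedge (1 : ι → A) c l := by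
  induction l generalizing c with
  | nil => rfl
  | cons j l ih => rw [coboundary_cons, wedge_cons, ih, Pi.one_apply, one_smul]

theorem wedge_add (a : ι → A) (c c' : List ι → F) : wedge a (c + c') = wedge a c + wedge a c' := by
  funext l
  induction l generalizing c c' with
  | nil => simp only [wedge_nil, Pi.add_apply, add_zero]
  | cons j l ih =>
    have h : wedge a (fun u => (c + c') (j :: u)) l =
        wedge a (fun u => c (j :: u)) l + wedge a (fun u => c' (j :: u)) l := ih _ _
    simp only [Pi.add_apply, wedge_cons, smul_add] at h ⊢
    rw [h]
    abel

theorem wedge_smul (a : ι → A) (r : A) (c : List ι → F) : wedge a (r • c) = r • wedge a c :=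
  funext fun l => wedge_linearMap a (r • LinearMap.id) c l

/-- `wedge a` as a linear map. -/
def wedgeHom (a : ι → A) : (List ι → F) →ₗ[A] (List ι → F) where
  toFun := wedge a
  map_add' := wedge_add a
  map_smul' := wedge_smul a

theorem wedge_sub (a : ι → A) (c c' : List ι → F) : wedge a (c - c') = wedge a c - wedge a c' :=
  map_sub (wedgeHom a) c c'

theorem wedge_zero (a : ι → A) : wedge a (0 : List ι → F) = 0 :=
  map_zero (wedgeHom a)

theorem wedge_wedge_swap (a b : ι → A) (c : List ι → F) :
    wedge a (wedge b c) = -wedge b (wedge a c) := by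
  funext l
  induction l generalizing c with
  | nil => rw [Pi.neg_apply, wedge_nil, wedge_nil, neg_zero]
  | cons j l ih =>
    rw [wedge_cons, wedge_cons_fun, Pi.neg_apply, wedge_cons, wedge_cons_fun, wedge_sub, wedge_sub,
      wedge_smul, wedge_smul, Pi.sub_apply, Pi.sub_apply, ih fun u => c (j :: u)]
    simp only [Pi.neg_apply, Pi.smul_apply]
    abel

theorem wedge_wedge_self (a : ι → A) (c : List ι → F) : wedge a (wedge a c) = 0 := by
  funext l
  induction l generalizing c with
  | nil => rfl
  | cons j l ih =>
    rw [wedge_cons, wedge_cons_fun, wedge_sub, wedge_smul, Pi.sub_apply, ih fun u => c (j :: u),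
      Pi.smul_apply, Pi.zero_apply, sub_zero, sub_self]
    rfl

theorem wedge_add_left (a b : ι → A) (c : List ι → F) :
    wedge (a + b) c = wedge a c + wedge b c := by
  funext l
  induction l generalizing c with
  | nil => simp only [wedge_nil, Pi.add_apply, add_zero]
  | cons j l ih =>
    simp only [Pi.add_apply, wedge_cons, add_smul, ih fun u => c (j :: u)]
    abel

theorem wedge_zero_left (c : List ι → F) : wedge (0 : ι → A) c = 0 := by
  simpa using wedge_add_left (0 : ι → A) 0 c

theorem wedge_mul_prod (a b : ι → A) (c : List ι → F) (l : List ι) :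
    wedge (a * b) (fun u => (u.map b).prod • c u) l = (l.map b).prod • wedge a c l := by
  induction l generalizing c with
  | nil => rw [wedge_nil, wedge_nil, smul_zero]
  | cons j l ih =>
    have hpull : (fun u : List ι => ((j :: u).map b).prod • c (j :: u)) =
        b j • fun u => (u.map b).prod • c (j :: u) := by
      funext u
      simp [mul_smul]
    rw [wedge_cons, wedge_cons, hpull, wedge_smul, Pi.smul_apply, ih, List.map_cons,
      List.prod_cons, smul_sub, Pi.mul_apply, smul_smul, smul_smul, smul_smul]
    congr 2
    ring

theorem wedge_eq_zero_of_forall_mem {a : ι → A} {l : List ι} (h : ∀ j ∈ l, a j = 0)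
    (c : List ι → F) : wedge a c l = 0 := by
  induction l generalizing c with
  | nil => rfl
  | cons j l ih =>
    rw [List.forall_mem_cons] at h
    rw [wedge_cons, h.1, ih h.2, zero_smul, sub_zero]

theorem wedge_eq_zero_of_forall {S : Set ι} {c : List ι → F}
    (hc : ∀ l, (∀ j ∈ l, j ∈ S) → c l = 0) (a : ι → A) {l : List ι} (hl : ∀ j ∈ l, j ∈ S) :
    wedge a c l = 0 := by
  induction l generalizing c with
  | nil => rfl
  | cons j l ih =>
    rw [List.forall_mem_cons] at hl
    rw [wedge_cons, hc l hl.2, ih (fun u hu => hc _ (List.forall_mem_cons.2 ⟨hl.1, hu⟩)) hl.2,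
      smul_zero, sub_zero]

theorem wedge_congr_of_length {m : ℕ} {a : ι → A} {c c' : List ι → F}
    (h : ∀ l : List ι, l.length = m → c l = c' l) {l : List ι} (hl : l.length = m + 1) :
    wedge a c l = wedge a c' l := by
  induction l generalizing m c c' with
  | nil => rfl
  | cons j l ih =>
    rw [wedge_cons, wedge_cons, h l (by simpa using hl)]
    cases m with
    | zero =>
      obtain rfl : l = [] := by simpa using hl
      rfl
    | succ m =>
      rw [ih (m := m) (fun u hu => h _ (by simpa using hu)) (by simpa using hl)]

theorem length_of_wedge_ne_zero {m : ℕ} {a : ι → A} {c : List ι → F}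
    (hc : ∀ l, c l ≠ 0 → l.length = m) {l : List ι} (hl : wedge a c l ≠ 0) : l.length = m + 1 := by
  contrapose! hl
  induction l generalizing m c with
  | nil => rfl
  | cons j l ih =>
    have hcl : c l = 0 := by
      by_contra h
      exact hl (by rw [List.length_cons, hc l h])
    rw [wedge_cons, hcl, smul_zero, zero_sub, neg_eq_zero]
    cases m with
    | zero =>
      have hcj : (fun u => c (j :: u)) = 0 := by
        funext u
        by_contra h
        simpa using hc _ h
      rw [hcj, wedge_zero, Pi.zero_apply]
    | succ m => exact ih (m := m) (fun u hu => by simpa using hc _ hu) (by simpa using hl)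

theorem coboundary_mem {S : Type*} [SetLike S F] [AddSubgroupClass S F] {T : S} {c : List ι → F}
    {l : List ι} (h : ∀ u : List ι, u.Sublist l → u.length + 1 = l.length → c u ∈ T) :
    coboundary c l ∈ T := by
  induction l generalizing c with
  | nil => exact zero_mem T
  | cons j l ih =>
    rw [coboundary_cons]
    exact sub_mem (h l (List.sublist_cons_self j l) (by simp))
      (ih fun u hu hlen => h _ (hu.cons_cons j) (by simpa using hlen))

end Cochains

section WedgeProducts
variable {ι : Type*}

/-- The exterior product of a list of one-forms: `wedge` applied repeatedly to the unit cochain. -/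
def wedgeProd (K : Type*) [AddCommGroupWithOne K] (Λ : List (ι → ℤ)) : List ι → K :=
  Λ.foldr wedge fun l => if l.isEmpty then 1 else 0

variable {K : Type*} [AddCommGroupWithOne K]

theorem wedgeProd_cons (a : ι → ℤ) (Λ : List (ι → ℤ)) :
    wedgeProd K (a :: Λ) = wedge a (wedgeProd K Λ) := rfl

theorem wedge_wedgeProd_of_mem {a : ι → ℤ} {Λ : List (ι → ℤ)} (h : a ∈ Λ) :
    wedge a (wedgeProd K Λ) = 0 := by
  induction Λ with
  | nil => cases h
  | cons b Λ ih =>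
    rw [wedgeProd_cons]
    rcases List.mem_cons.1 h with rfl | h
    · exact wedge_wedge_self _ _
    · rw [wedge_wedge_swap, ih h, wedge_zero, neg_zero]

theorem wedge_sum_wedgeProd {Λ M : List (ι → ℤ)} (h : M ⊆ Λ) :
    wedge M.sum (wedgeProd K Λ) = 0 := by
  induction M with
  | nil => exact wedge_zero_left _
  | cons a M ih =>
    rw [List.cons_subset] at h
    rw [List.sum_cons, wedge_add_left, ih h.2, wedge_wedgeProd_of_mem h.1, add_zero]

theorem wedgeProd_eq_zero {a : ι → ℤ} {Λ : List (ι → ℤ)} (h : a ∈ Λ) {l : List ι}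
    (hl : ∀ j ∈ l, a j = 0) : wedgeProd K Λ l = 0 := by
  induction Λ generalizing l with
  | nil => cases h
  | cons b Λ ih =>
    rw [wedgeProd_cons]
    rcases List.mem_cons.1 h with rfl | h
    · exact wedge_eq_zero_of_forall_mem hl _
    · exact wedge_eq_zero_of_forall (S := {j | a j = 0}) (fun l hl => ih h hl) b hl

theorem length_of_wedgeProd_ne_zero {Λ : List (ι → ℤ)} {l : List ι} (h : wedgeProd K Λ l ≠ 0) :
    l.length = Λ.length := by
  induction Λ generalizing l with
  | nil =>
    cases l with
    | nil => rfl
    | cons j l => exact absurd rfl h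
  | cons a Λ ih => exact length_of_wedge_ne_zero (fun l hl => ih hl) h

theorem wedgeProd_cons_eq_zero {Λ : List (ι → ℤ)} {j : ι} (h : ∀ a ∈ Λ, a j = 0) :
    (fun u => wedgeProd K Λ (j :: u)) = 0 := by
  induction Λ with
  | nil => rfl
  | cons a Λ ih =>
    rw [List.forall_mem_cons] at h
    rw [wedgeProd_cons, wedge_cons_fun, ih h.2, h.1, wedge_zero, zero_smul, sub_zero]

theorem wedgeProd_cons_eq {Λ : List (ι → ℤ)} {j : ι} {a : ι → ℤ} (ha : a j = 1)
    (h : ∀ a ∈ Λ, a j = 0) : (fun u => wedgeProd K (a :: Λ) (j :: u)) = wedgeProd K Λ := by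
  rw [wedgeProd_cons, wedge_cons_fun, wedgeProd_cons_eq_zero h, ha, wedge_zero, one_smul, sub_zero]

end WedgeProducts

section PairSums
variable {ι F : Type*} [AddCommGroup F]

/-- Sum of the values of `b` at the concatenations of `k` disjoint pairs of consecutive entries
of a list. This is evaluation at a chain whose boundary is computed in `pairSum_coboundary`. -/
def pairSum : ℕ → List ι → (List ι → F) → F
  | 0, _, b => b []
  | _ + 1, [], _ => 0
  | _ + 1, [_], _ => 0
  | k + 1, x :: y :: L, b => pairSum k L (fun u => b (x :: y :: u)) + pairSum (k + 1) (y :: L) b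

/-- As `pairSum`, but with the last entry of the list appended to the pairs. -/
def pairLastSum : ℕ → List ι → (List ι → F) → F
  | _, [], _ => 0
  | 0, [x], b => b [x]
  | _ + 1, [_], _ => 0
  | 0, _ :: y :: L, b => pairLastSum 0 (y :: L) b
  | k + 1, x :: y :: L, b =>
    pairLastSum k L (fun u => b (x :: y :: u)) + pairLastSum (k + 1) (y :: L) b

theorem pairSum_add : ∀ (k : ℕ) (L : List ι) (b c : List ι → F),
    pairSum k L (b + c) = pairSum k L b + pairSum k L c
  | 0, _, b, c => by simp only [pairSum, Pi.add_apply]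
  | k + 1, [], b, c => by simp only [pairSum, add_zero]
  | k + 1, [x], b, c => by simp only [pairSum, add_zero]
  | k + 1, x :: y :: L, b, c => by
    have hhead : pairSum k L (fun u => (b + c) (x :: y :: u)) = _ :=
      pairSum_add k L (fun u => b (x :: y :: u)) (fun u => c (x :: y :: u))
    rw [pairSum, pairSum, pairSum, hhead, pairSum_add (k + 1) (y :: L) b c]
    abel

theorem pairSum_sub (k : ℕ) (L : List ι) (b c : List ι → F) :
    pairSum k L (b - c) = pairSum k L b - pairSum k L c :=
  map_sub (AddMonoidHom.mk' (pairSum k L) (pairSum_add k L)) b c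

theorem pairSum_zero (k : ℕ) (L : List ι) : pairSum k L (0 : List ι → F) = 0 :=
  map_zero (AddMonoidHom.mk' (pairSum k L) (pairSum_add k L))

theorem pairSum_coboundary : ∀ (k : ℕ) (x : ι) (L : List ι) (b : List ι → F),
    pairSum (k + 1) (x :: L) (coboundary b) =
      pairLastSum k (x :: L) b - pairSum k L (fun u => b (x :: u))
  | 0, x, [], b => by simp only [pairSum, pairLastSum, sub_self]
  | k + 1, x, [], b => by simp only [pairSum, pairLastSum, sub_self]
  | k, x, y :: L, b => by
    have hcons : (fun u => coboundary b (x :: y :: u)) = (fun u => b (y :: u)) -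
        (fun u => b (x :: u)) + coboundary (fun u => b (x :: y :: u)) := by
      funext u
      rw [coboundary_cons, coboundary_cons]
      simp only [Pi.add_apply, Pi.sub_apply]
      abel
    rw [pairSum, hcons, pairSum_add, pairSum_sub, pairSum_coboundary k y L b]
    match k, L with
    | 0, L =>
      simp only [pairSum, pairLastSum, wedge_nil]
      abel
    | k + 1, [] =>
      simp only [pairSum, pairLastSum]
      abel
    | k + 1, z :: L =>
      rw [pairSum_coboundary k z L]
      simp only [pairSum, pairLastSum]
      abel

theorem pairSum_cons_of_eq_zero {x : ι} {b : List ι → F} (h : (fun u => b (x :: u)) = 0)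
    (k : ℕ) (L : List ι) : pairSum k (x :: L) b = pairSum k L b := by
  match k, L with
  | 0, _ => simp only [pairSum]
  | k + 1, [] => rfl
  | k + 1, y :: L =>
    have hxy : (fun u => b (x :: y :: u)) = 0 := funext fun u => congrFun h (y :: u)
    rw [pairSum, hxy, pairSum_zero, zero_add]

theorem pairSum_eq_zero_of_forall_mem : ∀ (k : ℕ) (L : List ι) (b : List ι → F),
    (∀ u, (∀ j ∈ u, j ∈ L) → b u = 0) → pairSum k L b = 0
  | 0, _, b, h => by simpa only [pairSum] using h [] (by simp)
  | _ + 1, [], _, _ => rfl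
  | _ + 1, [_], _, _ => rfl
  | k + 1, x :: y :: L, b, h => by
    rw [pairSum, pairSum_eq_zero_of_forall_mem, pairSum_eq_zero_of_forall_mem, add_zero]
    · exact fun u hu => h u fun j hj => List.mem_cons_of_mem _ (hu j hj)
    · refine fun u hu => h _ fun j hj => ?_
      have hju := hu j
      simp only [List.mem_cons] at hj ⊢
      tauto

theorem pairSum_eq_zero_of_weight {r : ℕ} {w : List ι → ℕ} (hw : w [] = 0) :
    ∀ (k : ℕ) (L : List ι) (_ : ∀ x y, [x, y] <:+: L → ∀ u, w (x :: y :: u) ≤ r + w u)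
      (b : List ι → F) (_ : ∀ u, w u ≤ r * k → b u = 0), pairSum k L b = 0
  | 0, L, _, b, h => by simpa only [pairSum] using h [] (by simp [hw])
  | _ + 1, [], _, _, _ => rfl
  | _ + 1, [_], _, _, _ => rfl
  | k + 1, x :: y :: L, hL, b, h => by
    have hyL : y :: L <:+: x :: y :: L := (List.suffix_cons _ _).isInfix
    rw [pairSum, pairSum_eq_zero_of_weight hw, pairSum_eq_zero_of_weight hw, add_zero]
    · exact fun p q hpq => hL p q (hpq.trans hyL)
    · exact h
    · exact fun p q hpq => hL p q (hpq.trans ((List.suffix_cons _ _).isInfix.trans hyL))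
    · intro u hu
      exact h _ ((hL x y (List.prefix_append [x, y] L).isInfix u).trans
        (by rw [mul_add_one]; omega))

theorem pairLastSum_eq_zero_of_weight {r : ℕ} {w : List ι → ℕ} (hw : w [] = 0) :
    ∀ (k : ℕ) (L : List ι) (_ : ∀ x y, [x, y] <:+: L → ∀ u, w (x :: y :: u) ≤ r + w u)
      (b : List ι → F) (_ : ∀ z ∈ L.getLast?, ∀ u, w u ≤ r * k → b (u ++ [z]) = 0),
      pairLastSum k L b = 0
  | _, [], _, _, _ => by simp only [pairLastSum]
  | 0, [x], _, _, h => h x (by simp) [] (by simp [hw])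
  | _ + 1, [_], _, _, _ => rfl
  | 0, x :: y :: L, hL, b, h => by
    rw [pairLastSum]
    refine pairLastSum_eq_zero_of_weight hw 0 _
      (fun p q hpq => hL p q (hpq.trans (List.suffix_cons _ _).isInfix)) b fun z hz => h z ?_
    rwa [List.getLast?_cons_cons]
  | k + 1, x :: y :: L, hL, b, h => by
    have hyL : y :: L <:+: x :: y :: L := (List.suffix_cons _ _).isInfix
    rw [pairLastSum, pairLastSum_eq_zero_of_weight hw, pairLastSum_eq_zero_of_weight hw, add_zero]
    · exact fun p q hpq => hL p q (hpq.trans hyL)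
    · intro z hz
      refine h z ?_
      rwa [List.getLast?_cons_cons]
    · exact fun p q hpq => hL p q (hpq.trans ((List.suffix_cons _ _).isInfix.trans hyL))
    · intro z hz u hu
      refine h z ?_ (x :: y :: u) ((hL x y (List.prefix_append [x, y] L).isInfix u).trans
        (by rw [mul_add_one]; omega))
      cases L with
      | nil => cases hz
      | cons c L => rwa [List.getLast?_cons_cons, List.getLast?_cons_cons]

end PairSums

section NontrivialCocycles
variable {ι σ : Type*}

/-- A `p`-cochain supported on the lists satisfying `S` which is a cocycle but not the coboundary
of any cochain supported on these lists. -/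
structure IsNontrivialCocycle {K : Type*} [AddCommGroup K] (S : List ι → Prop) (p : ℕ)
    (ψ : List ι → K) : Prop where
  length_eq : ∀ l, ψ l ≠ 0 → l.length = p
  coboundary_eq_zero : coboundary ψ = 0
  eq_zero_of_not : ∀ l, ¬S l → ψ l = 0
  coboundary_ne : ∀ β : List ι → K, (∀ l, ¬S l → β l = 0) → coboundary β ≠ ψ

theorem IsNontrivialCocycle.exists_coboundary_ne {K : Type*} [AddCommGroup K] {S : List ι → Prop}
    {p : ℕ} {ψ : List ι → K} (hψ : IsNontrivialCocycle S (p + 1) ψ) {β : List ι → K}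
    (hβ : ∀ l, l.length = p → ¬S l → β l = 0) :
    ∃ l, l.length = p + 1 ∧ coboundary β l ≠ ψ l := by
  let β' : List ι → K := fun l => if l.length = p then β l else 0
  have hβ' : ∀ l, β' l ≠ 0 → l.length = p := fun l hl => by
    contrapose! hl
    exact if_neg hl
  by_contra! h
  refine hψ.coboundary_ne β' (fun l hl => ?_) (funext fun l => ?_)
  · rw [ite_eq_right_iff]
    exact fun hlen => hβ l hlen hl
  by_cases hl : l.length = p + 1
  · rw [← h l hl]
    exact wedge_congr_of_length (fun u hu => if_pos hu) hl
  · rw [not_imp_comm.1 (hψ.length_eq l) hl]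
    exact not_imp_comm.1 (length_of_wedge_ne_zero hβ') hl

/-- Every vertex of `C` lies on one of the edges `V j` for `j` in the list. -/
def Covers (V : ι → Finset σ) (C : Finset σ) (l : List ι) : Prop :=
  ∀ i ∈ C, ∃ j ∈ l, i ∈ V j

theorem wedgeProd_eq_zero_of_not_covers {K : Type*} [AddCommGroupWithOne K] {V : ι → Finset σ}
    {C : Finset σ} {Λ : List (ι → ℤ)} (hC : ∀ i ∈ C, ∃ a ∈ Λ, ∀ j, a j ≠ 0 → i ∈ V j)
    {l : List ι} (hl : ¬Covers V C l) : wedgeProd K Λ l = 0 := by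
  simp only [Covers, not_forall] at hl
  obtain ⟨i, hi, hil⟩ := hl
  obtain ⟨a, ha, haj⟩ := hC i hi
  refine wedgeProd_eq_zero ha fun j hj => ?_
  by_contra h
  exact hil ⟨j, hj, haj j h⟩

variable [DecidableEq σ] {V : ι → Finset σ} {C : Finset σ}

/-- The number of vertices of `C` on the edges `V j` for `j` in the list. -/
def coveredCard (V : ι → Finset σ) (C : Finset σ) (l : List ι) : ℕ :=
  (C.filter fun i => ∃ j ∈ l, i ∈ V j).card

theorem Covers.card_le {l : List ι} (h : Covers V C l) : C.card ≤ coveredCard V C l :=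
  Finset.card_le_card fun i hi => Finset.mem_filter.2 ⟨hi, h i hi⟩

theorem eq_zero_of_coveredCard_lt {K : Type*} [Zero K] {β : List ι → K}
    (hβ : ∀ l, ¬Covers V C l → β l = 0) {l : List ι} (hl : coveredCard V C l < C.card) : β l = 0 :=
  hβ l fun h => hl.not_ge h.card_le

theorem coveredCard_nil : coveredCard V C [] = 0 := by
  simp [coveredCard]

theorem coveredCard_mono {l u : List ι} (h : l ⊆ u) : coveredCard V C l ≤ coveredCard V C u :=
  Finset.card_le_card (Finset.monotone_filter_right _ fun _ _ ⟨j, hj, hij⟩ => ⟨j, h hj, hij⟩)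

theorem coveredCard_append_le (l u : List ι) :
    coveredCard V C (l ++ u) ≤ coveredCard V C l + coveredCard V C u := by
  refine (Finset.card_le_card fun i hi => ?_).trans (Finset.card_union_le _ _)
  simp only [Finset.mem_filter, Finset.mem_union, List.mem_append] at hi ⊢
  obtain ⟨hi, j, hj | hj, h⟩ := hi
  · exact Or.inl ⟨hi, j, hj, h⟩
  · exact Or.inr ⟨hi, j, hj, h⟩

theorem coveredCard_le_of_subset {S : Finset σ} {l : List ι}
    (h : ∀ j ∈ l, ∀ i ∈ C, i ∈ V j → i ∈ S) : coveredCard V C l ≤ S.card := by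
  refine Finset.card_le_card fun i hi => ?_
  obtain ⟨hi, j, hj, hij⟩ := Finset.mem_filter.1 hi
  exact h j hj i hi hij

end NontrivialCocycles

section Residues
variable {n : ℕ}

/-- The residues `s, s+1, …, s+m-1`. -/
def residueList (n s m : ℕ) : List (ZMod n) := (List.range' s m).map Nat.cast

theorem residueList_succ (s m : ℕ) :
    residueList n s (m + 1) = (s : ZMod n) :: residueList n (s + 1) m := by
  rw [residueList, List.range'_succ, List.map_cons, residueList]

theorem val_of_mem_residueList {s m : ℕ} {i : ZMod n} (h : i ∈ residueList n s m)
    (hs : s + m ≤ n) : s ≤ i.val ∧ i.val < s + m := by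
  obtain ⟨j, hj, rfl⟩ := List.mem_map.1 h
  rw [List.mem_range'_1] at hj
  rwa [ZMod.val_cast_of_lt (by omega)]

theorem eq_add_one_of_isInfix_residueList {s m : ℕ} {x y : ZMod n}
    (h : [x, y] <:+: residueList n s m) : y = x + 1 := by
  induction m generalizing s with
  | zero => simp [residueList] at h
  | succ m ih =>
    rw [residueList_succ, List.infix_cons_iff] at h
    rcases h with h | h
    · rw [List.cons_prefix_cons] at h
      obtain ⟨rfl, h⟩ := h
      cases m with
      | zero => simp [residueList] at h
      | succ m =>
        rw [residueList_succ, List.cons_prefix_cons] at h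
        rw [h.1, Nat.cast_add_one]
    · exact ih h

/-- The indicator of the residues whose representative in `[0, n)` lies in `[a, b)`. -/
def residueIndicator (n a b : ℕ) (i : ZMod n) : ℤ := if a ≤ i.val ∧ i.val < b then 1 else 0

theorem residueIndicator_eq_one {a b : ℕ} {i : ZMod n} (ha : a ≤ i.val) (hb : i.val < b) :
    residueIndicator n a b i = 1 := if_pos ⟨ha, hb⟩

theorem residueIndicator_ne_zero_iff {a b : ℕ} {i : ZMod n} :
    residueIndicator n a b i ≠ 0 ↔ a ≤ i.val ∧ i.val < b := by
  simp [residueIndicator]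

theorem residueIndicator_eq_zero {a b : ℕ} {i : ZMod n} (h : i.val < a ∨ b ≤ i.val) :
    residueIndicator n a b i = 0 := if_neg (by omega)

theorem residueIndicator_add {a b c : ℕ} (hab : a ≤ b) (hbc : b ≤ c) :
    residueIndicator n a b + residueIndicator n b c = residueIndicator n a c := by
  funext i
  simp only [residueIndicator, Pi.add_apply]
  split_ifs <;> first | rfl | omega

/-- The indicators of `{s}, {s+1, s+2}, {s+3}, {s+4, s+5}, …`, comprising `3k` residues. -/
def tripleIndicators (n : ℕ) : ℕ → ℕ → List (ZMod n → ℤ)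
  | 0, _ => []
  | k + 1, s => residueIndicator n s (s + 1) :: residueIndicator n (s + 1) (s + 3) ::
      tripleIndicators n k (s + 3)

theorem length_tripleIndicators (k s : ℕ) : (tripleIndicators n k s).length = 2 * k := by
  induction k generalizing s with
  | zero => rfl
  | succ k ih => rw [tripleIndicators, List.length_cons, List.length_cons, ih, mul_add_one]

theorem sum_tripleIndicators (k s : ℕ) :
    (tripleIndicators n k s).sum = residueIndicator n s (s + 3 * k) := by
  induction k generalizing s with
  | zero =>
    funext i
    simp [tripleIndicators, residueIndicator]
  | succ k ih =>
    rw [tripleIndicators, List.sum_cons, List.sum_cons, ih,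
      residueIndicator_add (by omega) (by omega), residueIndicator_add (by omega) (by omega)]
    congr 1
    omega

theorem eq_zero_of_mem_tripleIndicators {k s : ℕ} {a : ZMod n → ℤ}
    (ha : a ∈ tripleIndicators n k s) {i : ZMod n} (hi : i.val < s ∨ s + 3 * k ≤ i.val) :
    a i = 0 := by
  induction k generalizing s with
  | zero => cases ha
  | succ k ih =>
    rw [tripleIndicators, List.mem_cons, List.mem_cons] at ha
    rcases ha with rfl | rfl | ha
    · exact residueIndicator_eq_zero (by omega)
    · exact residueIndicator_eq_zero (by omega)
    · exact ih ha (by omega)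

theorem mem_tripleIndicators {k s q : ℕ} (hq : q < k) :
    residueIndicator n (s + 3 * q) (s + 3 * q + 1) ∈ tripleIndicators n k s ∧
      residueIndicator n (s + 3 * q + 1) (s + 3 * q + 3) ∈ tripleIndicators n k s := by
  induction k generalizing s q with
  | zero => omega
  | succ k ih =>
    rw [tripleIndicators]
    cases q with
    | zero => simp
    | succ q =>
      have hmem := ih (s := s + 3) (q := q) (by omega)
      rw [show s + 3 + 3 * q = s + 3 * (q + 1) by omega] at hmem
      exact ⟨List.mem_cons_of_mem _ (List.mem_cons_of_mem _ hmem.1),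
        List.mem_cons_of_mem _ (List.mem_cons_of_mem _ hmem.2)⟩

section
variable (K : Type*) [AddCommGroupWithOne K]

theorem wedgeProd_tripleIndicators_cons_eq_zero (k : ℕ) {s : ℕ} {i : ZMod n} (hi : i.val < s) :
    (fun u => wedgeProd K (tripleIndicators n k s) (i :: u)) = 0 :=
  wedgeProd_cons_eq_zero fun _ ha => eq_zero_of_mem_tripleIndicators ha (Or.inl hi)

theorem wedgeProd_tripleIndicators_cons_cons (k s : ℕ) (h : s + 3 * (k + 1) ≤ n) :
    (fun u => wedgeProd K (tripleIndicators n (k + 1) s)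
      ((s : ZMod n) :: ((s + 1 : ℕ) : ZMod n) :: u)) =
      wedgeProd K (tripleIndicators n k (s + 3)) := by
  have hs : (s : ZMod n).val = s := ZMod.val_cast_of_lt (by omega)
  have hs' : ((s + 1 : ℕ) : ZMod n).val = s + 1 := ZMod.val_cast_of_lt (by omega)
  have hfirst : (fun u => wedgeProd K (tripleIndicators n (k + 1) s) ((s : ZMod n) :: u)) =
      wedgeProd K (residueIndicator n (s + 1) (s + 3) :: tripleIndicators n k (s + 3)) := by
    refine wedgeProd_cons_eq (residueIndicator_eq_one (by omega) (by omega))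
      (List.forall_mem_cons.2 ⟨residueIndicator_eq_zero (by omega), fun a ha => ?_⟩)
    exact eq_zero_of_mem_tripleIndicators ha (by omega)
  have hsecond := wedgeProd_cons_eq (K := K)
    (residueIndicator_eq_one (a := s + 1) (b := s + 3) hs'.ge (by omega))
    fun a ha => eq_zero_of_mem_tripleIndicators (k := k) (s := s + 3) ha (by omega)
  rw [← hsecond]
  exact funext fun u => congrFun hfirst (((s + 1 : ℕ) : ZMod n) :: u)

theorem pairSum_tripleIndicators (k s : ℕ) (h : s + 3 * k ≤ n) :
    pairSum k (residueList n s (3 * k)) (wedgeProd K (tripleIndicators n k s)) = 1 := by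
  induction k generalizing s with
  | zero =>
    rw [pairSum]
    rfl
  | succ k ih =>
    have htail : pairSum (k + 1) (residueList n (s + 1) (3 * k + 2))
        (wedgeProd K (tripleIndicators n (k + 1) s)) = 0 := by
      refine pairSum_eq_zero_of_forall_mem _ _ _ fun u hu =>
        wedgeProd_eq_zero (a := residueIndicator n s (s + 1)) List.mem_cons_self fun j hj => ?_
      have hjs := val_of_mem_residueList (hu j hj) (by omega)
      exact residueIndicator_eq_zero (by omega)
    rw [residueList_succ] at htail
    rw [show 3 * (k + 1) = 3 * k + 1 + 1 + 1 by omega, residueList_succ, residueList_succ, pairSum,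
      htail, add_zero, wedgeProd_tripleIndicators_cons_cons K k s h, residueList_succ,
      pairSum_cons_of_eq_zero (wedgeProd_tripleIndicators_cons_eq_zero K k ?_)]
    · exact ih (s + 3) (by omega)
    · rw [ZMod.val_cast_of_lt (by omega)]
      omega

end

end Residues

section CycleCocycles
variable {n : ℕ}

/-- The edge of the cycle joining `j` and `j + 1`. -/
def cycleEdge (j : ZMod n) : Finset (ZMod n) := {j, j + 1}

theorem mem_cycleEdge {i j : ZMod n} : i ∈ cycleEdge j ↔ i = j ∨ i = j + 1 := by
  simp [cycleEdge]

theorem mem_cycleEdge_of_val [NeZero n] {i j : ZMod n} (h : i.val = j.val ∨ i.val = j.val + 1) :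
    i ∈ cycleEdge j := by
  rw [mem_cycleEdge]
  refine h.imp (fun h => ZMod.val_injective n h) fun h => ?_
  rw [← ZMod.natCast_zmod_val i, h, Nat.cast_add_one, ZMod.natCast_zmod_val]

theorem coveredCard_singleton_le (C : Finset (ZMod n)) (x : ZMod n) :
    coveredCard cycleEdge C [x] ≤ 2 := by
  refine (coveredCard_le_of_subset (S := cycleEdge x) ?_).trans Finset.card_le_two
  simp

theorem coveredCard_consecutive_le (C : Finset (ZMod n)) (x : ZMod n) :
    coveredCard cycleEdge C [x, x + 1] ≤ 3 := by
  refine (coveredCard_le_of_subset (S := {x, x + 1, x + 1 + 1}) ?_).trans Finset.card_le_three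
  simp only [List.forall_mem_cons, mem_cycleEdge, Finset.mem_insert, Finset.mem_singleton]
  refine ⟨?_, ?_, by simp⟩ <;> tauto

theorem coveredCard_of_isInfix_residueList (C : Finset (ZMod n)) {s m : ℕ} {x y : ZMod n}
    (h : [x, y] <:+: residueList n s m) (u : List (ZMod n)) :
    coveredCard cycleEdge C (x :: y :: u) ≤ 3 + coveredCard cycleEdge C u := by
  obtain rfl := eq_add_one_of_isInfix_residueList h
  exact (coveredCard_append_le [x, x + 1] u).trans
    (Nat.add_le_add_right (coveredCard_consecutive_le C x) _)

theorem exists_mem_tripleIndicators_forall_mem_cycleEdge [NeZero n] {k : ℕ} {i : ZMod n}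
    (hi : i.val < 3 * k) :
    ∃ a ∈ tripleIndicators n k 0, ∀ j, a j ≠ 0 → i ∈ cycleEdge j := by
  obtain ⟨hone, htwo⟩ := mem_tripleIndicators (n := n) (k := k) (s := 0) (q := i.val / 3) (by omega)
  obtain h | h : i.val % 3 ≤ 1 ∨ i.val % 3 = 2 := by omega
  · refine ⟨_, hone, fun j hj => mem_cycleEdge_of_val ?_⟩
    rw [residueIndicator_ne_zero_iff] at hj
    omega
  · refine ⟨_, htwo, fun j hj => mem_cycleEdge_of_val ?_⟩
    rw [residueIndicator_ne_zero_iff] at hj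
    omega

variable {K : Type*} [AddCommGroupWithOne K] {C : Finset (ZMod n)} {k : ℕ}

theorem coboundary_wedgeProd_eq_zero [NeZero n] {Λ : List (ZMod n → ℤ)}
    (hΛ : Λ.sum = residueIndicator n 0 n) : coboundary (wedgeProd K Λ) = 0 := by
  have hone : residueIndicator n 0 n = fun _ => 1 :=
    funext fun i => residueIndicator_eq_one (Nat.zero_le _) i.val_lt
  rw [coboundary, ← hone, ← hΛ]
  exact wedge_sum_wedgeProd (List.Subset.refl Λ)

theorem pairSum_coboundary_eq_zero (k : ℕ) (b : List (ZMod n) → K)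
    (hlast : ∀ u, coveredCard cycleEdge C u ≤ 3 * k → b (u ++ [((3 * k + 2 : ℕ) : ZMod n)]) = 0)
    (hfirst : ∀ u, coveredCard cycleEdge C u ≤ 3 * k → b (0 :: u) = 0) :
    pairSum (k + 1) (residueList n 0 (3 * (k + 1))) (coboundary b) = 0 := by
  have hL := residueList_succ (n := n) 0 (3 * k + 2)
  rw [show 3 * (k + 1) = 3 * k + 2 + 1 by omega, hL, pairSum_coboundary, ← hL,
    pairLastSum_eq_zero_of_weight (coveredCard_nil (V := cycleEdge) (C := C)),
    pairSum_eq_zero_of_weight (coveredCard_nil (V := cycleEdge) (C := C)), sub_zero]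
  · exact fun x y h => coveredCard_of_isInfix_residueList C h
  · simpa using hfirst
  · exact fun x y h => coveredCard_of_isInfix_residueList C h
  · intro z hz u hu
    obtain rfl : ((3 * k + 2 : ℕ) : ZMod n) = z := by
      simpa [residueList, List.getLast?_map, List.getLast?_range'] using hz
    exact hlast u hu

theorem coboundary_ne_of_le_card [NeZero (1 : K)] (hk : 0 < k) (hkn : 3 * k ≤ n)
    (hC : 3 * k ≤ C.card) {β : List (ZMod n) → K}
    (hβ : ∀ l, ¬Covers cycleEdge C l → β l = 0) :
    coboundary β ≠ wedgeProd K (tripleIndicators n k 0) := by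
  intro h
  have hpair := pairSum_tripleIndicators K k 0 (n := n) (by omega)
  obtain ⟨k, rfl⟩ : ∃ j, k = j + 1 := ⟨k - 1, by omega⟩
  rw [← h, pairSum_coboundary_eq_zero (C := C)] at hpair
  · exact zero_ne_one hpair
  · intro u hu
    have hsingle := coveredCard_singleton_le C ((3 * k + 2 : ℕ) : ZMod n)
    exact eq_zero_of_coveredCard_lt hβ ((coveredCard_append_le _ _).trans_lt (by omega))
  · intro u hu
    have hsingle := coveredCard_singleton_le C (0 : ZMod n)
    exact eq_zero_of_coveredCard_lt hβ ((coveredCard_append_le [0] u).trans_lt (by omega))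

/-- Contracting with the index `3 * k`, at which the first factor is `1` and all others vanish,
removes that factor and leaves a product to which `pairSum_tripleIndicators` applies. -/
theorem coboundary_ne_of_lt_card [NeZero (1 : K)] (hk : 0 < k) (hkn : 3 * k < n)
    (hC : 3 * k < C.card) (he : coveredCard cycleEdge C [((3 * k : ℕ) : ZMod n), 0] ≤ 3)
    {β : List (ZMod n) → K} (hβ : ∀ l, ¬Covers cycleEdge C l → β l = 0) :
    coboundary β ≠ wedgeProd K (residueIndicator n (3 * k) n :: tripleIndicators n k 0) := by
  intro h
  have hpair := pairSum_tripleIndicators K k 0 (n := n) (by omega)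
  have hβ' {l} (hl : coveredCard cycleEdge C l ≤ 3 * k) : β l = 0 :=
    eq_zero_of_coveredCard_lt hβ (hl.trans_lt hC)
  have hval : ((3 * k : ℕ) : ZMod n).val = 3 * k := ZMod.val_cast_of_lt hkn
  have hcontract := wedgeProd_cons_eq (K := K) (Λ := tripleIndicators n k 0)
    (residueIndicator_eq_one hval.ge (hval.trans_lt hkn))
    (fun a ha => eq_zero_of_mem_tripleIndicators ha (by omega))
  rw [← hcontract, ← h, wedge_cons_fun, one_smul, pairSum_sub,
    pairSum_eq_zero_of_weight (coveredCard_nil (V := cycleEdge) (C := C)) _ _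
      (fun x y h => coveredCard_of_isInfix_residueList C h) _ (fun _ => hβ'), zero_sub] at hpair
  obtain ⟨k, rfl⟩ : ∃ j, k = j + 1 := ⟨k - 1, by omega⟩
  rw [pairSum_coboundary_eq_zero (C := C), neg_zero] at hpair
  · exact zero_ne_one hpair
  · intro u hu
    have hcast : ((3 * (k + 1) : ℕ) : ZMod n) = ((3 * k + 2 : ℕ) : ZMod n) + 1 := by
      push_cast
      ring
    have hconsec := coveredCard_consecutive_le C ((3 * k + 2 : ℕ) : ZMod n)
    rw [hcast]
    refine hβ' ((coveredCard_mono fun j hj => ?_).trans ((coveredCard_append_le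
      [((3 * k + 2 : ℕ) : ZMod n), ((3 * k + 2 : ℕ) : ZMod n) + 1] u).trans
        (show _ ≤ 3 * (k + 1) by omega)))
    simp only [List.mem_cons, List.mem_append, List.not_mem_nil] at hj ⊢
    tauto
  · intro u hu
    exact hβ' ((coveredCard_append_le [((3 * (k + 1) : ℕ) : ZMod n), 0] u).trans
      (show _ ≤ 3 * (k + 1) by omega))

theorem length_of_wedgeProd_cons_tripleIndicators_ne_zero {a : ZMod n → ℤ} {l : List (ZMod n)}
    (hl : wedgeProd K (a :: tripleIndicators n k 0) l ≠ 0) : l.length = 2 * k + 1 := by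
  rw [length_of_wedgeProd_ne_zero hl, List.length_cons, length_tripleIndicators]

theorem isNontrivialCocycle_tripleIndicators [NeZero n] [NeZero (1 : K)] (hk : n = 3 * k) :
    IsNontrivialCocycle (Covers cycleEdge (Finset.univ : Finset (ZMod n))) (2 * k)
      (wedgeProd K (tripleIndicators n k 0)) where
  length_eq l hl := by rw [length_of_wedgeProd_ne_zero hl, length_tripleIndicators]
  coboundary_eq_zero := coboundary_wedgeProd_eq_zero (by rw [sum_tripleIndicators, hk, zero_add])
  eq_zero_of_not l hl := wedgeProd_eq_zero_of_not_covers
    (fun i _ => exists_mem_tripleIndicators_forall_mem_cycleEdge (hk ▸ i.val_lt)) hl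
  coboundary_ne β hβ := by
    have hn := NeZero.pos n
    refine coboundary_ne_of_le_card (by omega) hk.ge ?_ hβ
    rw [Finset.card_univ, ZMod.card, hk]

theorem isNontrivialCocycle_cons_tripleIndicators [NeZero n] [NeZero (1 : K)] (hk : 0 < k)
    (hkn : 3 * k < n) (hC : 3 * k < C.card)
    (hlast : ∀ i ∈ C, 3 * k ≤ i.val → ∀ j : ZMod n, 3 * k ≤ j.val → i ∈ cycleEdge j)
    (he : coveredCard cycleEdge C [((3 * k : ℕ) : ZMod n), 0] ≤ 3) :
    IsNontrivialCocycle (Covers cycleEdge C) (2 * k + 1)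
      (wedgeProd K (residueIndicator n (3 * k) n :: tripleIndicators n k 0)) where
  length_eq l hl := length_of_wedgeProd_cons_tripleIndicators_ne_zero hl
  coboundary_eq_zero := coboundary_wedgeProd_eq_zero (by
    rw [List.sum_cons, sum_tripleIndicators, add_comm, zero_add,
      residueIndicator_add (Nat.zero_le _) hkn.le])
  eq_zero_of_not l hl := by
    refine wedgeProd_eq_zero_of_not_covers (fun i hi => ?_) hl
    rcases lt_or_ge i.val (3 * k) with h | h
    · obtain ⟨a, ha, haj⟩ := exists_mem_tripleIndicators_forall_mem_cycleEdge h
      exact ⟨a, List.mem_cons_of_mem _ ha, haj⟩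
    · exact ⟨_, List.mem_cons_self, fun j hj =>
        hlast i hi h j (residueIndicator_ne_zero_iff.1 hj).1⟩
  coboundary_ne _ hβ := coboundary_ne_of_lt_card hk hkn hC he hβ

theorem isNontrivialCocycle_of_mod_three_eq_one [NeZero n] [NeZero (1 : K)] (hk : 0 < k)
    (hkn : n = 3 * k + 1) :
    IsNontrivialCocycle (Covers cycleEdge (Finset.univ : Finset (ZMod n))) (2 * k + 1)
      (wedgeProd K (residueIndicator n (3 * k) n :: tripleIndicators n k 0)) := by
  refine isNontrivialCocycle_cons_tripleIndicators hk (by omega) ?_ (fun i _ hi j hj => ?_) ?_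
  · rw [Finset.card_univ, ZMod.card]
    omega
  · have hilt := i.val_lt
    have hjlt := j.val_lt
    exact mem_cycleEdge_of_val (by omega)
  · have hzero : ((3 * k : ℕ) : ZMod n) + 1 = 0 := by
      rw [← Nat.cast_add_one, ← hkn, ZMod.natCast_self]
    rw [← hzero]
    exact coveredCard_consecutive_le _ _

/-- The vertex `3 * k` has to be left out of `C`: the edges `{3k, 3k+1}` and `{0, 1}` would
otherwise cover four vertices. -/
theorem isNontrivialCocycle_of_mod_three_eq_two [NeZero n] [NeZero (1 : K)] (hk : 0 < k)
    (hkn : n = 3 * k + 2) :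
    IsNontrivialCocycle
      (Covers cycleEdge ((Finset.univ : Finset (ZMod n)).erase ((3 * k : ℕ) : ZMod n))) (2 * k + 1)
      (wedgeProd K (residueIndicator n (3 * k) n :: tripleIndicators n k 0)) := by
  refine isNontrivialCocycle_cons_tripleIndicators hk (by omega) ?_ (fun i hiC hi j hj => ?_) ?_
  · rw [Finset.card_erase_of_mem (Finset.mem_univ _), Finset.card_univ, ZMod.card]
    omega
  · have hne : i.val ≠ 3 * k := fun h =>
      Finset.ne_of_mem_erase hiC (by rw [← h, ZMod.natCast_zmod_val])
    have hilt := i.val_lt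
    have hjlt := j.val_lt
    exact mem_cycleEdge_of_val (by omega)
  · refine (coveredCard_le_of_subset
      (S := {((3 * k : ℕ) : ZMod n) + 1, 0, 0 + 1}) ?_).trans Finset.card_le_three
    simp only [List.forall_mem_cons, mem_cycleEdge, Finset.mem_erase, Finset.mem_insert,
      Finset.mem_singleton]
    refine ⟨?_, ?_, by simp⟩ <;> tauto

theorem exists_isNontrivialCocycle_covers_cycleEdge (K : Type*) [AddCommGroupWithOne K]
    [NeZero (1 : K)] {n : ℕ} (hn : 3 ≤ n) :
    ∃ (C : Finset (ZMod n)) (ψ : List (ZMod n) → K),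
      IsNontrivialCocycle (Covers cycleEdge C) ((2 * n + 1) / 3) ψ := by
  have : NeZero n := ⟨by omega⟩
  obtain ⟨k, h | h | h⟩ : ∃ k, n = 3 * k ∨ n = 3 * k + 1 ∨ n = 3 * k + 2 := ⟨n / 3, by omega⟩
  · rw [show (2 * n + 1) / 3 = 2 * k by omega]
    exact ⟨_, _, isNontrivialCocycle_tripleIndicators h⟩
  · rw [show (2 * n + 1) / 3 = 2 * k + 1 by omega]
    exact ⟨_, _, isNontrivialCocycle_of_mod_three_eq_one (by omega) h⟩
  · rw [show (2 * n + 1) / 3 = 2 * k + 1 by omega]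
    exact ⟨_, _, isNontrivialCocycle_of_mod_three_eq_two (by omega) h⟩

end CycleCocycles

section ProjectiveResolutions
universe u
open CategoryTheory
variable {R : Type u} [CommRing R]

theorem hasProjectiveDimensionLT_left_of_exact {A B C : Type u} [AddCommGroup A] [AddCommGroup B]
    [AddCommGroup C] [Module R A] [Module R B] [Module R C] [Module.Projective R B]
    {f : A →ₗ[R] B} {g : B →ₗ[R] C} (hf : Function.Injective f) (hg : Function.Surjective g)
    (hfg : Function.Exact f g) {k : ℕ} (h : HasProjectiveDimensionLT (ModuleCat.of R C) (k + 2)) :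
    HasProjectiveDimensionLT (ModuleCat.of R A) (k + 1) :=
  have hS : (ModuleCat.shortComplexOfCompEqZero _ _ hfg.linearMap_comp_eq_zero).ShortExact :=
    ModuleCat.shortComplex_shortExact _ hfg hf hg
  (hS.hasProjectiveDimensionLT_X₃_iff k ((IsProjective.iff_projective B).1 inferInstance)).1 h

variable {M : Type u} [AddCommGroup M] [Module R M] {T : ℕ → Submodule R M} {d : M →ₗ[R] M}

/-- The submodules `T i` of `M`, with the boundary map `d` of `M`, form a projective resolution of
`T 0 ⧸ d (T 1)`. All degrees sit inside one module `M` and share one boundary map, which avoids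
casts between the terms of the complex. -/
structure IsProjectiveResolution (T : ℕ → Submodule R M) (d : M →ₗ[R] M) : Prop where
  boundary_boundary : ∀ x, d (d x) = 0
  boundary_mem : ∀ {i}, ∀ x ∈ T (i + 1), d x ∈ T i
  exists_boundary_eq : ∀ {i}, ∀ x ∈ T (i + 1), d x = 0 → ∃ y ∈ T (i + 2), d y = x
  projective : ∀ i, Module.Projective R (T i)

namespace IsProjectiveResolution

theorem hasProjectiveDimensionLT_boundaries (hT : IsProjectiveResolution T d) {i k : ℕ}
    (h : HasProjectiveDimensionLT (ModuleCat.of R ((T (i + 1)).map d)) (k + 2)) :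
    HasProjectiveDimensionLT (ModuleCat.of R ((T (i + 2)).map d)) (k + 1) := by
  have hle : (T (i + 2)).map d ≤ T (i + 1) := Submodule.map_le_iff_le_comap.2 hT.boundary_mem
  have := hT.projective (i + 1)
  refine hasProjectiveDimensionLT_left_of_exact (f := Submodule.inclusion hle)
    (g := d.submoduleMap (T (i + 1))) (Submodule.inclusion_injective hle)
    (d.submoduleMap_surjective _) (fun x => ⟨fun hx => ?_, ?_⟩) h
  · obtain ⟨y, hy, hyx⟩ := hT.exists_boundary_eq x x.2 (congrArg Subtype.val hx)
    exact ⟨⟨d y, y, hy, rfl⟩, Subtype.ext hyx⟩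
  · rintro ⟨⟨_, y, hy, rfl⟩, rfl⟩
    exact Subtype.ext (hT.boundary_boundary y)

theorem projective_boundaries (hT : IsProjectiveResolution T d) {i k : ℕ}
    (h : HasProjectiveDimensionLT (ModuleCat.of R ((T (i + 1)).map d)) (k + 1)) :
    Module.Projective R ((T (i + k + 1)).map d) := by
  induction k generalizing i with
  | zero =>
    rw [zero_add, ← projective_iff_hasProjectiveDimensionLT_one] at h
    exact (IsProjective.iff_projective _).2 h
  | succ k ih =>
    rw [show i + (k + 1) + 1 = i + 1 + k + 1 by ring]
    exact ih (hT.hasProjectiveDimensionLT_boundaries h)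

theorem exists_retraction_onto_boundaries (hT : IsProjectiveResolution T d) {k : ℕ}
    [Module.Projective R ((T (k + 1)).map d)] :
    ∃ p : T (k + 1) →ₗ[R] (T (k + 2)).map d,
      ∀ y (hy : y ∈ T (k + 2)), (p ⟨d y, hT.boundary_mem y hy⟩ : M) = d y := by
  obtain ⟨s, hs⟩ := Module.projective_lifting_property (d.submoduleMap (T (k + 1)))
    LinearMap.id (d.submoduleMap_surjective _)
  have boundary_s : ∀ z, d (s z) = z := fun z => congrArg Subtype.val (LinearMap.congr_fun hs z)
  let r : T (k + 1) →ₗ[R] T (k + 1) := LinearMap.id - s ∘ₗ d.submoduleMap (T (k + 1))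
  have r_mem : ∀ x, (r x : M) ∈ (T (k + 2)).map d := fun x =>
    hT.exists_boundary_eq _ (r x).2 (by simp [r, boundary_s])
  refine ⟨((T (k + 1)).subtype ∘ₗ r).codRestrict _ r_mem, fun y hy => ?_⟩
  have hdd : d.submoduleMap (T (k + 1)) ⟨d y, hT.boundary_mem y hy⟩ = 0 :=
    Subtype.ext (hT.boundary_boundary y)
  change d y - s (d.submoduleMap (T (k + 1)) ⟨d y, hT.boundary_mem y hy⟩) = d y
  rw [hdd, map_zero, ZeroMemClass.coe_zero, sub_zero]

theorem exists_boundary_section (hT : IsProjectiveResolution T d) {k : ℕ}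
    (h : HasProjectiveDimensionLT (ModuleCat.of R ((T 1).map d)) (k + 1)) :
    ∃ q : T (k + 1) →ₗ[R] T (k + 2),
      ∀ y (hy : y ∈ T (k + 2)), d (q ⟨d y, hT.boundary_mem y hy⟩) = d y := by
  have : Module.Projective R ((T (k + 1)).map d) :=
    zero_add k ▸ hT.projective_boundaries (i := 0) h
  have := hT.projective (k + 1)
  obtain ⟨p, hp⟩ := hT.exists_retraction_onto_boundaries (k := k)
  obtain ⟨q, hq⟩ := Module.projective_lifting_property (d.submoduleMap (T (k + 2))) p
    (d.submoduleMap_surjective _)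
  exact ⟨q, fun y hy => (congrArg Subtype.val (LinearMap.congr_fun hq _)).trans (hp y hy)⟩

end IsProjectiveResolution
end ProjectiveResolutions

section ListChains
variable {ι A N : Type*} [CommRing A] [AddCommGroup N] [Module A N]

variable (ι A) in
/-- The boundary operator of the full simplex on `ι`, on chains indexed by lists; dual to
`coboundary`. -/
noncomputable def listBoundary : (List ι →₀ A) →ₗ[A] (List ι →₀ A) :=
  Finsupp.linearCombination A (coboundary fun l => Finsupp.single l 1)

theorem listBoundary_single (l : List ι) (r : A) :
    listBoundary ι A (Finsupp.single l r) = coboundary (fun u => Finsupp.single u r) l := by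
  rw [listBoundary, Finsupp.linearCombination_single]
  simpa using (coboundary_map (DistribSMul.toAddMonoidHom (List ι →₀ A) r)
    (fun l => Finsupp.single l 1) l).symm

theorem linearCombination_listBoundary (c : List ι → N) (x : List ι →₀ A) :
    Finsupp.linearCombination A c (listBoundary ι A x) =
      Finsupp.linearCombination A (coboundary c) x := by
  induction x using Finsupp.induction_linear with
  | zero => simp only [map_zero]
  | add x y hx hy => simp only [map_add, hx, hy]
  | single l r =>
    rw [listBoundary_single, Finsupp.linearCombination_single]
    calc Finsupp.linearCombination A c (coboundary (fun u => Finsupp.single u r) l)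
        = coboundary (fun u => r • c u) l := by
          simpa using (coboundary_map (Finsupp.linearCombination A c).toAddMonoidHom
            (fun u => Finsupp.single u r) l).symm
      _ = r • coboundary c l := coboundary_map (DistribSMul.toAddMonoidHom N r) c l

theorem listBoundary_listBoundary (x : List ι →₀ A) :
    listBoundary ι A (listBoundary ι A x) = 0 := by
  have h : coboundary (coboundary fun l : List ι => Finsupp.single l (1 : A)) = 0 :=
    wedge_wedge_self _ _
  refine (linearCombination_listBoundary _ x).trans ?_
  rw [h, Finsupp.linearCombination_zero, LinearMap.zero_apply]

end ListChains

section TaylorComplex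
variable {ι σ K : Type*}

/-- The exponent of the least common multiple of the monomials with exponents `ε j`, `j ∈ l`. -/
noncomputable def lcmExponent (ε : ι → σ →₀ ℕ) : List ι → σ →₀ ℕ
  | [] => 0
  | j :: l => ε j ⊔ lcmExponent ε l

theorem lcmExponent_mono (ε : ι → σ →₀ ℕ) {l l' : List ι} (h : l.Sublist l') :
    lcmExponent ε l ≤ lcmExponent ε l' := by
  induction h with
  | slnil => exact le_rfl
  | cons j _ ih => exact ih.trans le_sup_right
  | cons_cons j _ ih => exact sup_le_sup le_rfl ih

variable {ε : ι → σ →₀ ℕ}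

theorem lcmExponent_le {ω : σ →₀ ℕ} (h : ∀ j, ε j ≤ ω) (l : List ι) : lcmExponent ε l ≤ ω := by
  induction l with
  | nil => exact zero_le
  | cons j l ih => exact sup_le (h j) ih

variable [CommRing K]

variable (K) in
/-- The degree `i` part of the Taylor complex of the monomials with exponents `ε j`, embedded in
the chains of the full simplex by sending the generator of `l` to `lcm l` times `l`. -/
noncomputable def taylorModule (ε : ι → σ →₀ ℕ) (i : ℕ) :
    Submodule (MvPolynomial σ K) (List ι →₀ MvPolynomial σ K) :=
  Submodule.span _ (Set.range fun l : {l : List ι // l.length = i} =>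
    Finsupp.single l.1 (monomial (lcmExponent ε l.1) 1))

theorem single_monomial_mem_taylorModule {i : ℕ} {l : List ι} (hl : l.length = i) {α : σ →₀ ℕ}
    (h : lcmExponent ε l ≤ α) (c : K) :
    Finsupp.single l (monomial α c) ∈ taylorModule K ε i := by
  obtain ⟨γ, rfl⟩ := exists_add_of_le h
  have := (taylorModule K ε i).smul_mem (monomial γ c) (Submodule.subset_span ⟨⟨l, hl⟩, rfl⟩)
  simpa [monomial_mul, add_comm] using this

theorem taylorModule_induction {i : ℕ} {p : (List ι →₀ MvPolynomial σ K) → Prop} (zero : p 0)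
    (add : ∀ x y, p x → p y → p (x + y))
    (single : ∀ (l : List ι) (α : σ →₀ ℕ) (c : K), l.length = i → lcmExponent ε l ≤ α →
      p (Finsupp.single l (monomial α c))) {x : List ι →₀ MvPolynomial σ K}
    (hx : x ∈ taylorModule K ε i) : p x := by
  induction hx using Submodule.closure_induction with
  | zero => exact zero
  | add x y _ _ hx hy => exact add x y hx hy
  | smul_mem r x hx =>
    obtain ⟨⟨l, hl⟩, rfl⟩ := hx
    rw [Finsupp.smul_single, smul_eq_mul]
    induction r using MvPolynomial.induction_on' with
    | monomial γ c =>
      rw [monomial_mul]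
      exact single l _ _ hl le_add_self
    | add f g hf hg =>
      rw [add_mul, Finsupp.single_add]
      exact add _ _ hf hg

theorem projective_taylorModule (i : ℕ) :
    Module.Projective (MvPolynomial σ K) (taylorModule K ε i) := by
  refine Module.Projective.of_basis (Module.Basis.span (linearIndependent_iff.2 fun c hc => ?_))
  ext1 l
  have hcoeff := DFunLike.congr_fun hc l.1
  rw [Finsupp.linearCombination_apply, Finsupp.sum, Finsupp.finsetSum_apply,
    Finset.sum_eq_single l] at hcoeff
  · rw [Finsupp.smul_apply, Finsupp.single_eq_same, smul_eq_mul, Finsupp.zero_apply] at hcoeff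
    exact (IsRegular.monomial isRegular_one).right.mul_right_eq_zero_iff.1 hcoeff
  · intro u _ hu
    rw [Finsupp.smul_apply, Finsupp.single_eq_of_ne' (Subtype.coe_ne_coe.2 hu), smul_zero]
  · intro hl
    rw [Finsupp.notMem_support_iff.1 hl, zero_smul, Finsupp.zero_apply]

theorem listBoundary_mem_taylorModule {i : ℕ} (x : List ι →₀ MvPolynomial σ K)
    (hx : x ∈ taylorModule K ε (i + 1)) : listBoundary ι _ x ∈ taylorModule K ε i := by
  refine taylorModule_induction (p := fun x => listBoundary ι _ x ∈ taylorModule K ε i)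
    ?_ (fun x y hx hy => ?_) (fun l α c hl hα => ?_) hx
  · rw [map_zero]
    exact zero_mem _
  · rw [map_add]
    exact add_mem hx hy
  · rw [listBoundary_single]
    exact coboundary_mem fun u hu hlen => single_monomial_mem_taylorModule (by omega)
      ((lcmExponent_mono ε hu).trans hα) c

variable (K) in
open Classical in
/-- The `K`-linear contraction of the Taylor complex sending `x ^ α` times `l` to `x ^ α` times
`j :: l`, where `j` is an index, chosen depending on `α` only, whose monomial divides `x ^ α`. -/
noncomputable def taylorContraction (ε : ι → σ →₀ ℕ) :
    (List ι →₀ MvPolynomial σ K) →ₗ[K] (List ι →₀ MvPolynomial σ K) :=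
  Finsupp.lsum K fun l => (basisMonomials σ K).constr K fun α =>
    if h : ∃ j, ε j ≤ α then Finsupp.single (h.choose :: l) (monomial α 1) else 0

theorem exists_taylorContraction_single {α : σ →₀ ℕ} (h : ∃ j, ε j ≤ α) :
    ∃ j, ε j ≤ α ∧ ∀ (l : List ι) (c : K), taylorContraction K ε (Finsupp.single l (monomial α c)) =
      Finsupp.single (j :: l) (monomial α c) := by
  refine ⟨h.choose, h.choose_spec, fun l c => ?_⟩
  have hbasis : monomial α c = c • basisMonomials σ K α := by
    rw [coe_basisMonomials, smul_monomial, smul_eq_mul, mul_one]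
  rw [taylorContraction, Finsupp.lsum_single, hbasis, map_smul, Module.Basis.constr_basis,
    dif_pos h, Finsupp.smul_single, coe_basisMonomials]

theorem taylorContraction_mem_and_homotopy {i : ℕ} {x : List ι →₀ MvPolynomial σ K}
    (hx : x ∈ taylorModule K ε (i + 1)) : taylorContraction K ε x ∈ taylorModule K ε (i + 2) ∧
      listBoundary ι _ (taylorContraction K ε x) + taylorContraction K ε (listBoundary ι _ x) =
        x := by
  refine taylorModule_induction (p := fun x => taylorContraction K ε x ∈ taylorModule K ε (i + 2) ∧
    listBoundary ι _ (taylorContraction K ε x) + taylorContraction K ε (listBoundary ι _ x) =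
        x) (by simp) (fun x y hx hy => ?_) (fun l α c hl hα => ?_) hx
  · simp only [map_add]
    exact ⟨add_mem hx.1 hy.1, by rw [add_add_add_comm, hx.2, hy.2]⟩
  · obtain ⟨j, hj, hsingle⟩ := exists_taylorContraction_single (K := K) (ε := ε) (α := α) <| by
      obtain ⟨j, u, rfl⟩ := List.exists_cons_of_length_eq_add_one hl
      exact ⟨j, le_sup_left.trans hα⟩
    rw [hsingle, listBoundary_single, listBoundary_single, coboundary_cons]
    refine ⟨single_monomial_mem_taylorModule (by rw [List.length_cons, hl]) (sup_le hj hα) c, ?_⟩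
    have hmap := coboundary_map (taylorContraction K ε).toAddMonoidHom
      (fun u => Finsupp.single u (monomial α c)) l
    simp only [LinearMap.toAddMonoidHom_coe, hsingle] at hmap
    rw [← hmap, sub_add_cancel]

theorem exists_listBoundary_eq {i : ℕ} (x : List ι →₀ MvPolynomial σ K)
    (hx : x ∈ taylorModule K ε (i + 1)) (h : listBoundary ι _ x = 0) :
    ∃ y ∈ taylorModule K ε (i + 2), listBoundary ι _ y = x := by
  obtain ⟨hmem, hhomotopy⟩ := taylorContraction_mem_and_homotopy hx
  exact ⟨_, hmem, by rwa [h, map_zero, add_zero] at hhomotopy⟩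

/-- The linear functional on polynomial chains extending a cochain with constant values. -/
noncomputable def cochainMap (ψ : List ι → K) :
    (List ι →₀ MvPolynomial σ K) →ₗ[MvPolynomial σ K] MvPolynomial σ K :=
  Finsupp.linearCombination _ fun l => C (ψ l)

theorem cochainMap_single (ψ : List ι → K) (l : List ι) (r : MvPolynomial σ K) :
    cochainMap ψ (Finsupp.single l r) = r * C (ψ l) :=
  Finsupp.linearCombination_single _ _ _

theorem cochainMap_listBoundary {ψ : List ι → K} (hψ : coboundary ψ = 0)
    (x : List ι →₀ MvPolynomial σ K) : cochainMap ψ (listBoundary ι _ x) = 0 := by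
  have hC : coboundary (fun l => (C (ψ l) : MvPolynomial σ K)) = 0 := by
    funext l
    have hmap := coboundary_map (C : K →+* MvPolynomial σ K).toAddMonoidHom ψ l
    rw [hψ, Pi.zero_apply, map_zero] at hmap
    exact hmap
  rw [cochainMap, linearCombination_listBoundary, hC, Finsupp.linearCombination_zero,
    LinearMap.zero_apply]

theorem cochainMap_eq_of_listBoundary_eq {ψ : List ι → K} (hψ : coboundary ψ = 0) {i : ℕ}
    {x y : List ι →₀ MvPolynomial σ K} (hx : x ∈ taylorModule K ε (i + 1))
    (hy : y ∈ taylorModule K ε (i + 1)) (h : listBoundary ι _ x = listBoundary ι _ y) :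
    cochainMap ψ x = cochainMap ψ y := by
  obtain ⟨z, -, hz⟩ := exists_listBoundary_eq _ (sub_mem hx hy) (by rw [map_sub, h, sub_self])
  rw [← sub_eq_zero, ← map_sub, ← hz, cochainMap_listBoundary hψ]

theorem monomial_dvd_cochainMap {χ : σ →₀ ℕ} {ψ : List ι → K}
    (hψ : ∀ l, ¬χ ≤ lcmExponent ε l → ψ l = 0) {i : ℕ} {x : List ι →₀ MvPolynomial σ K}
    (hx : x ∈ taylorModule K ε i) : monomial χ 1 ∣ cochainMap ψ x := by
  refine taylorModule_induction (p := fun x => monomial χ 1 ∣ cochainMap ψ x) ?_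
    (fun x y hx hy => ?_) (fun l α c _ hα => ?_) hx
  · rw [map_zero]
    exact dvd_zero _
  · rw [map_add]
    exact dvd_add hx hy
  · rw [cochainMap_single]
    by_cases hle : χ ≤ lcmExponent ε l
    · exact ((monomial_dvd_monomial.2 ⟨Or.inr (hle.trans hα), one_dvd c⟩)).mul_right _
    · rw [hψ l hle, C_0, mul_zero]
      exact dvd_zero _

section TopChains
variable {ω : σ →₀ ℕ} (hω : ∀ j, ε j ≤ ω)

variable (K) in
/-- The element of multidegree `ω` of the Taylor complex lying over the face `l`; it is `0` on
lists of the wrong length. -/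
noncomputable def topChain (i : ℕ) (l : List ι) : taylorModule K ε i :=
  if hl : l.length = i then
    ⟨Finsupp.single l (monomial ω 1), single_monomial_mem_taylorModule hl (lcmExponent_le hω l) 1⟩
  else 0

theorem coe_topChain {i : ℕ} {l : List ι} (hl : l.length = i) :
    (topChain K hω i l : List ι →₀ MvPolynomial σ K) = Finsupp.single l (monomial ω 1) := by
  rw [topChain, dif_pos hl]

theorem coboundary_topChain {i : ℕ} {l : List ι} (hl : l.length = i + 1) :
    coboundary (topChain K hω i) l = ⟨listBoundary ι _ (topChain K hω (i + 1) l),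
      listBoundary_mem_taylorModule _ (Subtype.mem _)⟩ := by
  apply Subtype.ext
  simp only [coe_topChain hω hl, listBoundary_single]
  have hmap := coboundary_map (taylorModule K ε i).subtype.toAddMonoidHom (topChain K hω i) l
  exact hmap.symm.trans (wedge_congr_of_length (fun _ hu => coe_topChain hω hu) hl)

theorem topChain_eq_smul {i : ℕ} {l : List ι} (hl : l.length = i) :
    topChain K hω i l = monomial (ω - lcmExponent ε l) (1 : K) •
      (⟨Finsupp.single l (monomial (lcmExponent ε l) 1),
        single_monomial_mem_taylorModule hl le_rfl 1⟩ : taylorModule K ε i) := by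
  apply Subtype.ext
  rw [coe_topChain hω hl, SetLike.val_smul, Finsupp.smul_single, smul_eq_mul, monomial_mul, mul_one,
    tsub_add_cancel_of_le (lcmExponent_le hω l)]

theorem coeff_apply_topChain_eq_zero {i : ℕ} {χ : σ →₀ ℕ}
    {Φ : taylorModule K ε i →ₗ[MvPolynomial σ K] MvPolynomial σ K}
    (hΦ : ∀ x, monomial χ 1 ∣ Φ x) {l : List ι} (hl : l.length = i)
    (hχ : ¬χ ≤ lcmExponent ε l) : coeff ω (Φ (topChain K hω i l)) = 0 := by
  obtain ⟨r, hr⟩ := hΦ ⟨_, single_monomial_mem_taylorModule hl le_rfl 1⟩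
  rw [topChain_eq_smul hω hl, map_smul, hr, smul_eq_mul, ← mul_assoc, monomial_mul, mul_one,
    coeff_monomial_mul', if_neg]
  contrapose! hχ
  intro v
  have hv := hχ v
  have := lcmExponent_le hω l v
  simp only [Finsupp.add_apply, Finsupp.tsub_apply] at hv
  omega

theorem coboundary_coeff_apply_topChain {i : ℕ} {ψ : List ι → K}
    {Φ : taylorModule K ε i →ₗ[MvPolynomial σ K] MvPolynomial σ K}
    (hΦ : ∀ y (hy : y ∈ taylorModule K ε (i + 1)),
      Φ ⟨listBoundary ι _ y, listBoundary_mem_taylorModule y hy⟩ = cochainMap ψ y)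
    {l : List ι} (hl : l.length = i + 1) :
    coboundary (fun u => coeff ω (Φ (topChain K hω i u))) l = ψ l := by
  classical
  have hmap := coboundary_map (lcoeff K ω ∘ₗ Φ.restrictScalars K).toAddMonoidHom
    (topChain K hω i) l
  refine hmap.trans ?_
  change coeff ω (Φ _) = _
  rw [coboundary_topChain hω hl, hΦ _ (Subtype.mem _), coe_topChain hω hl, cochainMap_single,
    mul_comm, coeff_C_mul, coeff_monomial, if_pos rfl, mul_one]

end TopChains
end TaylorComplex

section TaylorResolution
universe u
open CategoryTheory
variable {ι σ K : Type u} [CommRing K] {ε : ι → σ →₀ ℕ}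

theorem isProjectiveResolution_taylorModule :
    IsProjectiveResolution (taylorModule K ε) (listBoundary ι (MvPolynomial σ K)) where
  boundary_boundary := listBoundary_listBoundary
  boundary_mem := listBoundary_mem_taylorModule
  exists_boundary_eq := exists_listBoundary_eq
  projective := projective_taylorModule

theorem map_listBoundary_taylorModule_one :
    (taylorModule K ε 1).map (listBoundary ι _) =
      Submodule.map (Finsupp.lsingle [])
        (Ideal.span (Set.range fun j => monomial (ε j) (1 : K))) := by
  have hsingleton : ∀ j : ι,
      listBoundary ι _ (Finsupp.single [j] (monomial (lcmExponent ε [j]) (1 : K))) =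
        Finsupp.single [] (monomial (ε j) 1) := fun j => by
    rw [listBoundary_single, coboundary_cons, coboundary, wedge_nil, sub_zero, lcmExponent,
      lcmExponent, sup_of_le_left zero_le]
  rw [taylorModule, Submodule.map_span, Ideal.span, Submodule.map_span]
  congr 1
  ext x
  constructor
  · rintro ⟨_, ⟨⟨l, hl⟩, rfl⟩, rfl⟩
    obtain ⟨j, rfl⟩ := List.length_eq_one_iff.1 hl
    exact ⟨_, ⟨j, rfl⟩, (hsingleton j).symm⟩
  · rintro ⟨_, ⟨j, rfl⟩, rfl⟩
    exact ⟨_, ⟨⟨[j], rfl⟩, rfl⟩, hsingleton j⟩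

theorem hasProjectiveDimensionLT_map_listBoundary {k : ℕ}
    (h : HasProjectiveDimensionLT (ModuleCat.of (MvPolynomial σ K)
      (MvPolynomial σ K ⧸ Ideal.span (Set.range fun j => monomial (ε j) (1 : K)))) (k + 2)) :
    HasProjectiveDimensionLT
      (ModuleCat.of (MvPolynomial σ K) ((taylorModule K ε 1).map (listBoundary ι _))) (k + 1) := by
  set I := Ideal.span (Set.range fun j => monomial (ε j) (1 : K))
  have hideal : HasProjectiveDimensionLT (ModuleCat.of (MvPolynomial σ K) I) (k + 1) :=
    hasProjectiveDimensionLT_left_of_exact (f := Submodule.subtype I) (g := Submodule.mkQ I)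
      Subtype.val_injective (Submodule.mkQ_surjective I) (LinearMap.exact_subtype_mkQ I) h
  rw [map_listBoundary_taylorModule_one]
  exact hasProjectiveDimensionLT_of_iso (LinearEquiv.toModuleIso
    (Submodule.equivMapOfInjective _ (Finsupp.single_injective _) I)) (k + 1)

theorem exists_extension_cochainMap {k : ℕ}
    (h : HasProjectiveDimensionLT (ModuleCat.of (MvPolynomial σ K)
      ((taylorModule K ε 1).map (listBoundary ι _))) (k + 1))
    {χ : σ →₀ ℕ} {ψ : List ι → K} (hψ : coboundary ψ = 0)
    (hχ : ∀ l, ¬χ ≤ lcmExponent ε l → ψ l = 0) :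
    ∃ Φ : taylorModule K ε (k + 1) →ₗ[MvPolynomial σ K] MvPolynomial σ K,
      (∀ y (hy : y ∈ taylorModule K ε (k + 2)),
        Φ ⟨listBoundary ι _ y, listBoundary_mem_taylorModule y hy⟩ = cochainMap ψ y) ∧
      ∀ x, monomial χ 1 ∣ Φ x := by
  obtain ⟨q, hq⟩ := isProjectiveResolution_taylorModule.exists_boundary_section h
  exact ⟨cochainMap ψ ∘ₗ (taylorModule K ε (k + 2)).subtype ∘ₗ q,
    fun y hy => cochainMap_eq_of_listBoundary_eq hψ (Subtype.mem _) hy (hq y hy),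
    fun x => monomial_dvd_cochainMap hχ (q x).2⟩

theorem IsNontrivialCocycle.not_hasProjectiveDimensionLT [Finite ι] {χ : σ →₀ ℕ} {k : ℕ}
    {ψ : List ι → K} (hψ : IsNontrivialCocycle (fun l => χ ≤ lcmExponent ε l) (k + 2) ψ) :
    ¬HasProjectiveDimensionLT (ModuleCat.of (MvPolynomial σ K)
      (MvPolynomial σ K ⧸ Ideal.span (Set.range fun j => monomial (ε j) (1 : K)))) (k + 2) := by
  have := Fintype.ofFinite ι
  intro h
  obtain ⟨Φ, hΦ, hdvd⟩ := exists_extension_cochainMap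
    (hasProjectiveDimensionLT_map_listBoundary h) hψ.coboundary_eq_zero hψ.eq_zero_of_not
  have hω : ∀ j, ε j ≤ Finset.univ.sup ε := fun j => Finset.le_sup (Finset.mem_univ j)
  obtain ⟨l, hl, hne⟩ := hψ.exists_coboundary_ne
    fun l hl hχ => coeff_apply_topChain_eq_zero hω hdvd hl hχ
  exact hne (coboundary_coeff_apply_topChain hω hΦ hl)

end TaylorResolution

section CycleExponents
variable {ι σ : Type*}

/-- The exponent of the product of the variables in `S`. -/
noncomputable def squarefreeExponent (S : Finset σ) : σ →₀ ℕ :=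
  Finsupp.indicator S fun _ _ => 1

theorem squarefreeExponent_apply [DecidableEq σ] (S : Finset σ) (i : σ) :
    squarefreeExponent S i = if i ∈ S then 1 else 0 := by
  rw [squarefreeExponent, Finsupp.indicator_apply, dite_eq_ite]

theorem squarefreeExponent_le_iff {S : Finset σ} {α : σ →₀ ℕ} :
    squarefreeExponent S ≤ α ↔ ∀ i ∈ S, α i ≠ 0 := by
  classical
  refine forall_congr' fun i => ?_
  rw [squarefreeExponent_apply]
  split_ifs with hi <;> simp [hi, Nat.one_le_iff_ne_zero]

theorem lcmExponent_squarefreeExponent_ne_zero {V : ι → Finset σ} {l : List ι} {i : σ} :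
    lcmExponent (fun j => squarefreeExponent (V j)) l i ≠ 0 ↔ ∃ j ∈ l, i ∈ V j := by
  induction l with
  | nil => simp [lcmExponent]
  | cons j l ih =>
    classical
    have hj : squarefreeExponent (V j) i ≠ 0 ↔ i ∈ V j := by
      simp [squarefreeExponent_apply]
    rw [lcmExponent, Finsupp.sup_apply, List.exists_mem_cons_iff, ← ih, ← hj]
    omega

theorem squarefreeExponent_le_lcmExponent_iff {V : ι → Finset σ} {C : Finset σ} {l : List ι} :
    squarefreeExponent C ≤ lcmExponent (fun j => squarefreeExponent (V j)) l ↔ Covers V C l := by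
  simp only [squarefreeExponent_le_iff, lcmExponent_squarefreeExponent_ne_zero, Covers]

theorem cycleIdeal_eq_span_monomial (K : Type) [Field K] {n : ℕ} (hn : 3 ≤ n) :
    cycleIdeal K n =
      Ideal.span (Set.range fun j => monomial (squarefreeExponent (cycleEdge j)) (1 : K)) := by
  have : Fact (1 < n) := ⟨by omega⟩
  have hexponent : ∀ j : ZMod n,
      squarefreeExponent (cycleEdge j) = Finsupp.single j 1 + Finsupp.single (j + 1) 1 := by
    intro j
    ext i
    have hj : j ≠ j + 1 := by simp
    simp only [squarefreeExponent_apply, mem_cycleEdge, Finsupp.add_apply,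
      Finsupp.single_apply]
    grind
  rw [cycleIdeal]
  congr 2
  funext j
  rw [hexponent, X, X, monomial_mul, one_mul]

end CycleExponents

section PowerTorsion
variable {R M N κ : Type*} [CommRing R] [AddCommGroup M] [Module R M] [AddCommGroup N] [Module R N]

open Submonoid Module

theorem isTorsion'_powers_of_injective {f : M →ₗ[R] N} (hf : Function.Injective f) {r : R}
    (h : IsTorsion' N (powers r)) : IsTorsion' M (powers r) := fun x => by
  obtain ⟨a, ha⟩ := @h (f x)
  exact ⟨a, hf ((f.map_smul_of_tower a x).trans (ha.trans f.map_zero.symm))⟩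

theorem isTorsion'_powers_of_surjective {f : M →ₗ[R] N} (hf : Function.Surjective f) {r : R}
    (h : IsTorsion' M (powers r)) : IsTorsion' N (powers r) := fun y => by
  obtain ⟨x, rfl⟩ := hf y
  obtain ⟨a, ha⟩ := @h x
  exact ⟨a, by rw [← f.map_smul_of_tower, ha, map_zero]⟩

theorem isTorsion'_powers_of_mem_radical {g : κ → R} (hM : ∀ u, IsTorsion' M (powers (g u)))
    {r : R} (hr : r ∈ (Ideal.span (Set.range g)).radical) : IsTorsion' M (powers r) := by
  rw [Submodule.isTorsion'_powers_iff]
  intro x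
  have hle : Ideal.span (Set.range g) ≤ (Ideal.torsionOf R M x).radical := by
    refine Ideal.span_le.2 (Set.range_subset_iff.2 fun u => ?_)
    obtain ⟨k, hk⟩ := (Submodule.isTorsion'_powers_iff (g u)).1 (hM u) x
    exact ⟨k, (Ideal.mem_torsionOf_iff x _).2 hk⟩
  obtain ⟨k, hk⟩ := Ideal.radical_le_radical_iff.2 hle hr
  exact ⟨k, (Ideal.mem_torsionOf_iff x _).1 hk⟩

theorem isTorsion'_powers_localizedModule {S : Submonoid R} {r : R} (h : IsTorsion' M (powers r)) :
    IsTorsion' (LocalizedModule S M) (powers r) := by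
  rw [Submodule.isTorsion'_powers_iff] at h ⊢
  intro y
  induction y using LocalizedModule.induction_on with
  | h x s =>
    obtain ⟨k, hk⟩ := h x
    exact ⟨k, by rw [LocalizedModule.smul'_mk, hk, LocalizedModule.zero_mk]⟩

theorem isTorsion'_ker_mkLinearMap (r : R) :
    IsTorsion' (LinearMap.ker (LocalizedModule.mkLinearMap (powers r) M)) (powers r) := fun x => by
  obtain ⟨a, ha⟩ := (IsLocalizedModule.eq_zero_iff (powers r) _).1 x.2
  exact ⟨a, Subtype.ext ha⟩

theorem isTorsion'_coker_mkLinearMap (r : R) :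
    IsTorsion' (LocalizedModule (powers r) M ⧸
      LinearMap.range (LocalizedModule.mkLinearMap (powers r) M)) (powers r) := fun y => by
  obtain ⟨y, rfl⟩ := Submodule.Quotient.mk_surjective _ y
  obtain ⟨⟨x, a⟩, hx⟩ :=
    IsLocalizedModule.surj (powers r) (LocalizedModule.mkLinearMap (powers r) M) y
  exact ⟨a, (Submodule.Quotient.mk_eq_zero _).2 ⟨x, hx.symm⟩⟩

end PowerTorsion

section CechCohomology
variable {ι R : Type*} [CommRing R]

/-- Vanishing of the colimit over `N` of the degree `p` cohomology of the Koszul complexes of the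
powers `e ^ N` with coefficients in `M`, that is, of the degree `p` Čech cohomology of `e`. -/
def CechExactAt (e : ι → R) (p : ℕ) (M : Type*) [AddCommGroup M] [Module R M] : Prop :=
  ∀ (N : ℕ) (c : List ι → M), (∀ l : List ι, l.length = p + 1 → wedge (e ^ N) c l = 0) →
    ∃ (k : ℕ) (b : List ι → M), ∀ l : List ι, l.length = p →
      (l.map (e ^ k)).prod • c l = wedge (e ^ (N + k)) b l

variable {e : ι → R} {L M Q : Type*} [AddCommGroup L] [AddCommGroup M] [AddCommGroup Q]
  [Module R L] [Module R M] [Module R Q] {p : ℕ}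

theorem prod_map_pow_add (e : ι → R) (k k' : ℕ) (l : List ι) :
    (l.map (e ^ (k + k'))).prod = (l.map (e ^ k')).prod * (l.map (e ^ k)).prod := by
  rw [pow_add, mul_comm]
  exact List.prod_map_mul

theorem wedge_pow_add (N k : ℕ) (c : List ι → M) (l : List ι) :
    wedge (e ^ (N + k)) (fun u => (u.map (e ^ k)).prod • c u) l =
      (l.map (e ^ k)).prod • wedge (e ^ N) c l := by
  rw [pow_add, wedge_mul_prod]

theorem exists_map_eq_sub_wedge {f : L →ₗ[R] M} {g : M →ₗ[R] Q} (hg : Function.Surjective g)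
    (hfg : Function.Exact f g) {a : ι → R} {c : List ι → M} {q : List ι → Q}
    (h : ∀ l : List ι, l.length = p → g (c l) = wedge a q l) :
    ∃ (x : List ι → L) (b : List ι → M),
      ∀ l : List ι, l.length = p → f (x l) = c l - wedge a b l := by
  choose s hs using hg
  have hlift : ∀ l : List ι, l.length = p → ∃ x, f x = c l - wedge a (fun u => s (q u)) l := by
    intro l hl
    refine (hfg _).1 ?_
    rw [map_sub, h l hl, ← wedge_linearMap, sub_eq_zero]
    simp only [hs]
  choose! x hx using hlift
  exact ⟨x, _, hx⟩

theorem wedge_map_eq_of_map_eq_sub_wedge {f : L →ₗ[R] M} {a : ι → R} {x : List ι → L}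
    {c b : List ι → M} (h : ∀ l : List ι, l.length = p → f (x l) = c l - wedge a b l)
    {l : List ι} (hl : l.length = p + 1) : f (wedge a x l) = wedge a c l := by
  have hcongr : wedge a (fun u => f (x u)) l = wedge a (c - wedge a b) l :=
    wedge_congr_of_length h hl
  rw [← wedge_linearMap, hcongr, wedge_sub, wedge_wedge_self, sub_zero]

theorem CechExactAt.of_exact_middle {f : L →ₗ[R] M} {g : M →ₗ[R] Q} (hf : Function.Injective f)
    (hg : Function.Surjective g) (hfg : Function.Exact f g) (hL : CechExactAt e p L)
    (hQ : CechExactAt e p Q) : CechExactAt e p M := by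
  intro N c hc
  obtain ⟨k, q, hq⟩ := hQ N (fun l => g (c l)) fun l hl => by
    rw [wedge_linearMap, hc l hl, map_zero]
  obtain ⟨x, b, hx⟩ := exists_map_eq_sub_wedge (c := fun l => (l.map (e ^ k)).prod • c l) hg hfg
    fun l hl => (g.map_smul _ _).trans (hq l hl)
  obtain ⟨k', d, hd⟩ := hL (N + k) x fun l hl => hf <| by
    rw [wedge_map_eq_of_map_eq_sub_wedge hx hl, wedge_pow_add, hc l hl, smul_zero, map_zero]
  refine ⟨k + k', (fun l => f (d l)) + fun l => (l.map (e ^ k')).prod • b l, fun l hl => ?_⟩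
  rw [wedge_add, Pi.add_apply, ← add_assoc, wedge_pow_add, wedge_linearMap, ← hd l hl, map_smul,
    hx l hl, prod_map_pow_add, smul_sub, mul_smul, sub_add_cancel]

theorem CechExactAt.of_exact_left {f : L →ₗ[R] M} {g : M →ₗ[R] Q} (hf : Function.Injective f)
    (hg : Function.Surjective g) (hfg : Function.Exact f g) (hM : CechExactAt e (p + 1) M)
    (hQ : CechExactAt e p Q) : CechExactAt e (p + 1) L := by
  intro N c hc
  obtain ⟨k, b, hb⟩ := hM N (fun l => f (c l)) fun l hl => by
    rw [wedge_linearMap, hc l hl, map_zero]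
  obtain ⟨k', q, hq⟩ := hQ (N + k) (fun l => g (b l)) fun l hl => by
    rw [wedge_linearMap, ← hb l hl, map_smul, hfg.apply_apply_eq_zero, smul_zero]
  obtain ⟨x, b', hx⟩ := exists_map_eq_sub_wedge (c := fun l => (l.map (e ^ k')).prod • b l) hg hfg
    fun l hl => (g.map_smul _ _).trans (hq l hl)
  refine ⟨k + k', x, fun l hl => hf ?_⟩
  rw [← add_assoc, wedge_map_eq_of_map_eq_sub_wedge hx hl, wedge_pow_add, ← hb l hl, map_smul,
    prod_map_pow_add, mul_smul]

theorem wedge_sum_smul_cons [Fintype ι] (a r : ι → R) {c : List ι → M} {l : List ι}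
    (h : ∀ j, wedge a c (j :: l) = 0) :
    wedge a (∑ j, r j • fun u => c (j :: u)) l = (∑ j, r j * a j) • c l := by
  have hcons : ∀ j, wedge a (fun u => c (j :: u)) l = a j • c l := fun j =>
    (sub_eq_zero.1 ((wedge_cons _ _ _ _).symm.trans (h j))).symm
  have hsum : wedge a (∑ j, r j • fun u => c (j :: u)) =
      ∑ j, r j • wedge a fun u => c (j :: u) := by
    exact (map_sum (wedgeHom (F := M) a) _ _).trans
      (Finset.sum_congr rfl fun j _ => wedge_smul _ _ _)
  rw [hsum, Finset.sum_apply, Finset.sum_smul]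
  simp only [Pi.smul_apply, hcons, smul_smul]

theorem CechExactAt.of_bijective_smul [Finite ι] {r : R}
    (hr : r ∈ (Ideal.span (Set.range e)).radical)
    (hM : Function.Bijective fun x : M => r • x) : CechExactAt e p M := by
  have := Fintype.ofFinite ι
  intro N c hc
  have hle : Ideal.span (Set.range e) ≤ (Ideal.span (Set.range (e ^ N))).radical :=
    Ideal.span_le.2 (Set.range_subset_iff.2 fun j => ⟨N, Ideal.subset_span ⟨j, rfl⟩⟩)
  obtain ⟨m, hm⟩ := Ideal.radical_le_radical_iff.2 hle hr
  obtain ⟨a, ha⟩ := Ideal.mem_span_range_iff_exists_fun.1 hm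
  have hbij : Function.Bijective fun x : M => r ^ m • x := smul_iterate (α := M) r m ▸ hM.iterate m
  choose c' hc' using fun l => hbij.2 (c l)
  obtain rfl : r ^ m • c' = c := funext hc'
  have hc'0 : ∀ l : List ι, l.length = p + 1 → wedge (e ^ N) c' l = 0 := fun l hl =>
    hbij.1 <| by
      change r ^ m • _ = r ^ m • _
      rw [smul_zero, ← hc l hl, wedge_smul, Pi.smul_apply]
  refine ⟨0, ∑ j, a j • fun u => c' (j :: u), fun l hl => ?_⟩
  rw [add_zero, wedge_sum_smul_cons _ _ fun j => hc'0 _ (congrArg (· + 1) hl), ha, pow_zero,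
    List.prod_eq_one (by simp), one_smul, Pi.smul_apply]

theorem CechExactAt.of_torsion [Finite ι]
    (hM : ∀ j, Module.IsTorsion' M (Submonoid.powers (e j))) : CechExactAt e (p + 1) M := by
  intro N c _
  have hkill : ∀ l : List ι, l.length = p + 1 →
      ∃ k, ∀ k' ≥ k, (l.map (e ^ k')).prod • c l = 0 := by
    intro l hl
    obtain ⟨j, u, rfl⟩ := List.exists_cons_of_length_eq_add_one hl
    obtain ⟨k, hk⟩ := (Submodule.isTorsion'_powers_iff (e j)).1 (hM j) (c (j :: u))
    refine ⟨k, fun k' hk' => ?_⟩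
    obtain ⟨i, rfl⟩ := Nat.exists_eq_add_of_le' hk'
    rw [List.map_cons, List.prod_cons, Pi.pow_apply, pow_add, mul_right_comm, mul_smul, hk,
      smul_zero]
  choose! k hk using hkill
  have hfin := List.finite_length_eq ι (p + 1)
  refine ⟨hfin.toFinset.sup k, 0, fun l hl => ?_⟩
  rw [wedge_zero, Pi.zero_apply]
  exact hk l hl _ (Finset.le_sup (hfin.mem_toFinset.2 hl))

theorem CechExactAt.of_localizedModule [Finite ι] {r : R}
    (hr : r ∈ (Ideal.span (Set.range e)).radical)
    (hker : CechExactAt e (p + 1) (LinearMap.ker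
      (LocalizedModule.mkLinearMap (Submonoid.powers r) M)))
    (hcoker : CechExactAt e p (LocalizedModule (Submonoid.powers r) M ⧸
      LinearMap.range (LocalizedModule.mkLinearMap (Submonoid.powers r) M))) :
    CechExactAt e (p + 1) M := by
  set f := LocalizedModule.mkLinearMap (Submonoid.powers r) M
  have hbij : Function.Bijective fun y : LocalizedModule (Submonoid.powers r) M => r • y :=
    (Module.End.isUnit_iff _).1
      (IsLocalizedModule.map_units f ⟨r, Submonoid.mem_powers r⟩)
  have hrange : CechExactAt e (p + 1) (LinearMap.range f) :=
    .of_exact_left (LinearMap.range f).subtype_injective (Submodule.mkQ_surjective _)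
      (LinearMap.exact_subtype_mkQ _) (.of_bijective_smul hr hbij) hcoker
  refine .of_exact_middle (LinearMap.ker f).subtype_injective f.surjective_rangeRestrict
    (LinearMap.exact_iff.2 ?_) hker hrange
  rw [LinearMap.ker_rangeRestrict, Submodule.range_subtype]

end CechCohomology

section ArithmeticalRank
universe u
variable {ι κ : Type*} {R : Type u} [CommRing R] {e : ι → R}

theorem cechExactAt_of_card_lt [Finite ι] {g : κ → R}
    (h : (Ideal.span (Set.range g)).radical = (Ideal.span (Set.range e)).radical) (G : Finset κ)
    (M : Type u) [AddCommGroup M] [Module R M]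
    (hM : ∀ v ∉ G, Module.IsTorsion' M (Submonoid.powers (g v))) {p : ℕ} (hp : G.card < p) :
    CechExactAt e p M := by
  classical
  obtain ⟨p, rfl⟩ := Nat.exists_eq_add_one_of_ne_zero (Nat.ne_zero_of_lt hp)
  induction G using Finset.induction_on generalizing M p with
  | empty =>
    refine .of_torsion fun j =>
      isTorsion'_powers_of_mem_radical (fun v => hM v (Finset.notMem_empty v)) ?_
    rw [h]
    exact Ideal.le_radical (Ideal.subset_span ⟨j, rfl⟩)
  | insert w G hw ih =>
    rw [Finset.card_insert_of_notMem hw] at hp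
    obtain ⟨q, rfl⟩ := Nat.exists_eq_add_one_of_ne_zero (n := p) (by omega)
    have hgw : g w ∈ (Ideal.span (Set.range e)).radical :=
      h ▸ Ideal.le_radical (Ideal.subset_span ⟨w, rfl⟩)
    have hM' : ∀ v ∉ G, v ≠ w → Module.IsTorsion' M (Submonoid.powers (g v)) := fun v hv hvw =>
      hM v (by simp [hv, hvw])
    refine .of_localizedModule hgw (ih _ (fun v hv => ?_) _ (by omega))
      (ih _ (fun v hv => ?_) _ (by omega))
    · obtain rfl | hvw := eq_or_ne v w
      · exact isTorsion'_ker_mkLinearMap _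
      · exact isTorsion'_powers_of_injective (Submodule.subtype_injective _) (hM' v hv hvw)
    · obtain rfl | hvw := eq_or_ne v w
      · exact isTorsion'_coker_mkLinearMap _
      · exact isTorsion'_powers_of_surjective (Submodule.mkQ_surjective _)
          (isTorsion'_powers_localizedModule (hM' v hv hvw))

theorem GeneratedUpToRadical.cechExactAt [Finite ι] {t p : ℕ}
    (h : GeneratedUpToRadical (Ideal.span (Set.range e)) t) (hp : t < p) : CechExactAt e p R := by
  obtain ⟨g, hg⟩ := h
  exact cechExactAt_of_card_lt hg Finset.univ R (fun v hv => absurd (Finset.mem_univ v) hv)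
    (by rwa [Finset.card_fin])

end ArithmeticalRank

section MonomialCech
variable {ι σ K : Type*}

theorem lcmExponent_le_sum (ε : ι → σ →₀ ℕ) (l : List ι) : lcmExponent ε l ≤ (l.map ε).sum := by
  induction l with
  | nil => exact le_rfl
  | cons j l ih => exact sup_le le_self_add (ih.trans le_add_self)

theorem sum_map_apply_eq_zero {ε : ι → σ →₀ ℕ} {l : List ι} {i : σ}
    (h : lcmExponent ε l i = 0) : (l.map ε).sum i = 0 := by
  induction l with
  | nil => rfl
  | cons j l ih =>
    rw [lcmExponent, Finsupp.sup_apply, Nat.max_eq_zero_iff] at h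
    rw [List.map_cons, List.sum_cons, Finsupp.add_apply, h.1, ih h.2]

variable [CommRing K] {ε : ι → σ →₀ ℕ}

theorem prod_map_monomial_pow (ε : ι → σ →₀ ℕ) (m : ℕ) (l : List ι) :
    (l.map ((fun j => monomial (ε j) (1 : K)) ^ m)).prod = monomial (m • (l.map ε).sum) 1 := by
  induction l with
  | nil => simp
  | cons j l ih =>
    rw [List.map_cons, List.prod_cons, ih, Pi.pow_apply, monomial_pow, one_pow, monomial_mul,
      one_mul, List.map_cons, List.sum_cons, smul_add]

theorem monomial_mul_left_cancel {α : σ →₀ ℕ} {f g : MvPolynomial σ K}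
    (h : monomial α 1 * f = monomial α 1 * g) : f = g :=
  (IsRegular.monomial isRegular_one).left h

/-- The class of `ψ / x ^ χ` vanishes in the Čech complex of the monomials, because `ψ / x ^ χ`
has polynomial numerators and is a cocycle. -/
theorem exists_prod_mul_C_eq_monomial_mul_wedge {p : ℕ}
    (h : CechExactAt (fun j => monomial (ε j) (1 : K)) p (MvPolynomial σ K))
    {χ : σ →₀ ℕ} {ψ : List ι → K} (hψ : coboundary ψ = 0)
    (hχ : ∀ l, ¬χ ≤ lcmExponent ε l → ψ l = 0) :
    ∃ (m : ℕ) (b : List ι → MvPolynomial σ K), ∀ l : List ι, l.length = p →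
      (l.map ((fun j => monomial (ε j) (1 : K)) ^ m)).prod * C (ψ l) =
        monomial χ 1 * wedge ((fun j => monomial (ε j) (1 : K)) ^ m) b l := by
  set e : ι → MvPolynomial σ K := fun j => monomial (ε j) (1 : K)
  have hψC : coboundary (fun l => (C (ψ l) : MvPolynomial σ K)) = 0 := by
    funext l
    have hmap := coboundary_map (C : K →+* MvPolynomial σ K).toAddMonoidHom ψ l
    rw [hψ, Pi.zero_apply, map_zero] at hmap
    exact hmap
  let c : List ι → MvPolynomial σ K := fun l => monomial ((l.map ε).sum - χ) (ψ l)
  have hc : monomial χ (1 : K) • c = fun l => (l.map (e ^ 1)).prod • C (ψ l) := by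
    funext l
    rw [prod_map_monomial_pow, one_smul, Pi.smul_apply, smul_eq_mul, smul_eq_mul, mul_comm _ (C _),
      C_mul_monomial, monomial_mul, one_mul, mul_one]
    by_cases hl : χ ≤ lcmExponent ε l
    · rw [add_tsub_cancel_of_le (hl.trans (lcmExponent_le_sum ε l))]
    · rw [hχ l hl, monomial_zero, monomial_zero]
  obtain ⟨k, b, hb⟩ := h (0 + 1) c fun l _ => monomial_mul_left_cancel (α := χ) <| by
    rw [mul_zero, ← smul_eq_mul, ← Pi.smul_apply, ← wedge_smul, hc, wedge_pow_add, pow_zero,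
      ← coboundary_eq_wedge_one, hψC, Pi.zero_apply, smul_zero]
  refine ⟨1 + k, b, fun l hl => ?_⟩
  rw [prod_map_pow_add, mul_assoc, ← smul_eq_mul (_ : MvPolynomial σ K) (C _), ← congrFun hc l,
    Pi.smul_apply, smul_eq_mul, mul_left_comm, ← smul_eq_mul _ (c l), hb l hl, zero_add]

/-- The multiple of the cochain `x ^ χ b l / x ^ (m ∑ ε)` by `x ^ ω`, where `ω` is large enough to
clear all denominators. -/
noncomputable def clearedCochain (ε : ι → σ →₀ ℕ) (ω χ : σ →₀ ℕ) (m : ℕ)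
    (b : List ι → MvPolynomial σ K) (l : List ι) : MvPolynomial σ K :=
  monomial (ω - m • (l.map ε).sum + χ) 1 * b l

theorem coboundary_clearedCochain {p m : ℕ} {ω χ : σ →₀ ℕ} {ψ : List ι → K}
    {b : List ι → MvPolynomial σ K} (hω : ∀ u : List ι, u.length = p → m • (u.map ε).sum ≤ ω)
    {l : List ι} (hl : l.length = p + 1)
    (hb : (l.map ((fun j => monomial (ε j) (1 : K)) ^ m)).prod * C (ψ l) =
      monomial χ 1 * wedge ((fun j => monomial (ε j) (1 : K)) ^ m) b l) :
    coboundary (clearedCochain ε ω χ m b) l = monomial ω 1 * C (ψ l) := by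
  set e : ι → MvPolynomial σ K := fun j => monomial (ε j) (1 : K)
  have hscale : wedge (e ^ m) (fun u => (u.map (e ^ m)).prod • clearedCochain ε ω χ m b u) l =
      wedge (e ^ m) ((monomial (ω + χ) 1 : MvPolynomial σ K) • b) l :=
    wedge_congr_of_length (fun u hu => by
      rw [prod_map_monomial_pow, clearedCochain, smul_eq_mul, Pi.smul_apply, smul_eq_mul,
        ← mul_assoc, monomial_mul, one_mul, ← add_assoc, add_tsub_cancel_of_le (hω u hu)]) hl
  refine monomial_mul_left_cancel (α := m • (l.map ε).sum) ?_
  rw [← prod_map_monomial_pow]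
  calc (l.map (e ^ m)).prod * coboundary (clearedCochain ε ω χ m b) l
      = wedge (e ^ m) (fun u => (u.map (e ^ m)).prod • clearedCochain ε ω χ m b u) l := by
        rw [coboundary_eq_wedge_one (A := MvPolynomial σ K), ← smul_eq_mul, ← wedge_mul_prod,
          one_mul]
    _ = monomial ω 1 * (monomial χ 1 * wedge (e ^ m) b l) := by
        rw [hscale, wedge_smul, Pi.smul_apply, smul_eq_mul, ← mul_assoc, monomial_mul, one_mul]
    _ = (l.map (e ^ m)).prod * (monomial ω 1 * C (ψ l)) := by rw [← hb, mul_left_comm]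

theorem coeff_clearedCochain_eq_zero {m : ℕ} {ω χ : σ →₀ ℕ} {b : List ι → MvPolynomial σ K}
    {l : List ι} {i : σ} (hi : χ i ≠ 0) (hl : lcmExponent ε l i = 0) :
    coeff ω (clearedCochain ε ω χ m b l) = 0 := by
  rw [clearedCochain, coeff_monomial_mul', if_neg]
  intro hle
  have hlei := hle i
  rw [Finsupp.add_apply, Finsupp.tsub_apply, Finsupp.smul_apply, sum_map_apply_eq_zero hl,
    smul_zero, tsub_zero] at hlei
  omega

theorem IsNontrivialCocycle.le_of_generatedUpToRadical [Finite ι] {S : Finset σ} {p t : ℕ}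
    {ψ : List ι → K}
    (hψ : IsNontrivialCocycle (fun l => squarefreeExponent S ≤ lcmExponent ε l) p ψ)
    (h : GeneratedUpToRadical (Ideal.span (Set.range fun j => monomial (ε j) (1 : K))) t) :
    p ≤ t := by
  classical
  by_contra! ht
  obtain ⟨p, rfl⟩ := Nat.exists_eq_add_one_of_ne_zero (Nat.ne_zero_of_lt ht)
  obtain ⟨m, b, hb⟩ := exists_prod_mul_C_eq_monomial_mul_wedge (h.cechExactAt ht)
    hψ.coboundary_eq_zero hψ.eq_zero_of_not
  have hfin := List.finite_length_eq ι p
  let ω : σ →₀ ℕ := hfin.toFinset.sup fun u => m • (u.map ε).sum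
  have hω : ∀ u : List ι, u.length = p → m • (u.map ε).sum ≤ ω := fun u hu =>
    Finset.le_sup (f := fun u : List ι => m • (u.map ε).sum) (hfin.mem_toFinset.2 hu)
  let β := clearedCochain ε ω (squarefreeExponent S) m b
  obtain ⟨l, hl, hne⟩ := hψ.exists_coboundary_ne (β := fun u => coeff ω (β u)) fun l _ hS => by
    rw [squarefreeExponent_le_iff] at hS
    push Not at hS
    obtain ⟨i, hi, hli⟩ := hS
    exact coeff_clearedCochain_eq_zero (by rw [squarefreeExponent_apply, if_pos hi]; simp) hli
  refine hne ((coboundary_map (lcoeff K ω).toAddMonoidHom β l).trans ?_)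
  change coeff ω (coboundary β l) = ψ l
  rw [coboundary_clearedCochain hω hl (hb l hl), mul_comm, coeff_C_mul, coeff_monomial,
    if_pos rfl, mul_one]

end MonomialCech

section CycleLowerBounds
variable (K : Type) [Field K] {n : ℕ} (hn : 3 ≤ n)
include hn

theorem exists_isNontrivialCocycle_cycleIdeal :
    ∃ (C : Finset (ZMod n)) (ψ : List (ZMod n) → K), IsNontrivialCocycle
      (fun l => squarefreeExponent C ≤ lcmExponent (fun j => squarefreeExponent (cycleEdge j)) l)
      ((2 * n + 1) / 3) ψ := by
  simp only [squarefreeExponent_le_lcmExponent_iff]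
  exact exists_isNontrivialCocycle_covers_cycleEdge K hn

theorem le_of_generatedUpToRadical_cycleIdeal {t : ℕ}
    (h : GeneratedUpToRadical (cycleIdeal K n) t) : (2 * n + 1) / 3 ≤ t := by
  have : NeZero n := ⟨by omega⟩
  obtain ⟨C, ψ, hψ⟩ := exists_isNontrivialCocycle_cycleIdeal K hn
  rw [cycleIdeal_eq_span_monomial K hn] at h
  exact hψ.le_of_generatedUpToRadical h

theorem le_of_quotProjDimLE_cycleIdeal {d : ℕ} (h : QuotProjDimLE (cycleIdeal K n) d) :
    (2 * n + 1) / 3 ≤ d := by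
  have : NeZero n := ⟨by omega⟩
  obtain ⟨C, ψ, hψ⟩ := exists_isNontrivialCocycle_cycleIdeal K hn
  obtain ⟨k, hk⟩ : ∃ k, (2 * n + 1) / 3 = k + 2 := ⟨(2 * n + 1) / 3 - 2, by omega⟩
  rw [hk] at hψ
  rw [QuotProjDimLE, cycleIdeal_eq_span_monomial K hn] at h
  by_contra! hd
  exact hψ.not_hasProjectiveDimensionLT
    (CategoryTheory.hasProjectiveDimensionLT_of_ge _ (d + 1) _ (by omega))

end CycleLowerBounds

/-- For `n ≥ 3`, `ara I(Cₙ) = pd_R R/I(Cₙ)`, and the common value is `2n/3`, `(2n+1)/3`,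
`(2n-1)/3` according to `n ≡ 0, 1, 2 (mod 3)`. -/
theorem cycle_ara_eq_pd (K : Type) [Field K] (n : ℕ) (hn : 3 ≤ n) :
    araRank (cycleIdeal K n) =
        (if n % 3 = 0 then 2 * n / 3
          else if n % 3 = 1 then (2 * n + 1) / 3
          else (2 * n - 1) / 3) ∧
      projDim (MvPolynomial (ZMod n) K) (MvPolynomial (ZMod n) K ⧸ cycleIdeal K n) =
        ((araRank (cycleIdeal K n) : ℕ) : ℕ∞) := by
  have hval : (if n % 3 = 0 then 2 * n / 3 else if n % 3 = 1 then (2 * n + 1) / 3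
      else (2 * n - 1) / 3) = (2 * n + 1) / 3 := by
    split_ifs <;> omega
  have hara : araRank (cycleIdeal K n) = (2 * n + 1) / 3 :=
    araRank_eq_of_isLeast ⟨generatedUpToRadical_cycleIdeal K hn,
      fun _ h => le_of_generatedUpToRadical_cycleIdeal K hn h⟩
  rw [hval, hara]
  refine ⟨rfl, le_antisymm ((projDim_le_iff _).2 (quotProjDimLE_cycleIdeal K hn)) ?_⟩
  by_contra! hlt
  obtain ⟨d, hd⟩ := ENat.ne_top_iff_exists.1 hlt.ne_top
  rw [← hd, Nat.cast_lt] at hlt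
  exact hlt.not_ge (le_of_quotProjDimLE_cycleIdeal K hn ((projDim_le_iff d).1 hd.ge))
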